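/- arXiv:1708.02127 — 4 statements merged into one kernel-verified Lean document; each statement's English description precedes it below -/
import Mathlib

section
/- The Mittag-Leffler function is the Laplace transform of the M-Wright function: for 0 < β < 1 and every s ≥ 0, ∫_0^∞ e^{−sτ} M_β(τ) dτ = E_β(−s). -/
open MeasureTheory

/-- The Mittag-Leffler function `E_β(x) = ∑ xⁿ/Γ(βn+1)` (real version). -/
noncomputable def mittagLefflerReal (β : ℝ) (x : ℝ) : ℝ :=
  ∑' n : ℕ, x ^ n / Real.Gamma (β * n + 1)

/-- The M-Wright function `M_β(z) = ∑ (-z)ⁿ/(n! Γ(-βn+1-β))`. -/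
noncomputable def mWright (β : ℝ) (z : ℝ) : ℝ :=
  ∑' n : ℕ, (-z) ^ n / (n.factorial * Real.Gamma (-β * n + 1 - β))

/-! Hankel's formula `1 / Γ(-p) = (2πi)⁻¹ ∫ e^σ σ^p dσ`, applied to each term of the two series,
turns `M_β(τ)` and `E_β(-s)` into the Hankel integrals of `σ^(β-1) e^(-τ σ^β)` and
`σ^(β-1) / (s + σ^β)`. The second integrand is the Laplace transform of the first in `τ`, and
Fubini's theorem applies because for `β < 1` the contour can be chosen with `Re σ^β` as large as we
like: its rays need to make an angle between `π / 2` and `π / (2β)` with the positive axis and to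
start at a distant vertex `a > 0`. A distant vertex also makes the geometric series
`(s + σ^β)⁻¹ = ∑ (-s)^n σ^(-β(n+1))` converge on the contour.

For `p ≥ 1` the contour in Hankel's formula can be moved to the vertex `0`, where the integral is a
Gamma integral rotated to the direction of the ray, and the reflection formula applies. Both sides
satisfy `D(p) = -p D(p-1)` and are continuous in `p`, which gives the remaining exponents. -/

section

open Set Filter Topology Complex
open scoped Real

lemma differentiableOn_integral_cpow_mul_exp_neg_mul {s : ℂ} (hs : 0 < s.re) :
    DifferentiableOn ℂ (fun w : ℂ ↦ ∫ t : ℝ in Ioi 0, t ^ (s - 1) * exp (-(w * t)))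
      {w | 0 < w.re} := by
  intro w (hw : 0 < w.re)
  have hnorm (z : ℂ) {t : ℝ} (ht : 0 < t) (u : ℂ) :
      ‖(t : ℂ) ^ z * exp (-(u * t))‖ = t ^ z.re * Real.exp (-u.re * t) := by
    rw [norm_mul, norm_exp, norm_cpow_eq_rpow_re_of_pos ht]
    simp
  have hint {σ b : ℝ} (hσ : -1 < σ) (hb : 0 < b) :
      IntegrableOn (fun t : ℝ ↦ t ^ σ * Real.exp (-b * t)) (Ioi 0) := by
    simpa using integrableOn_rpow_mul_exp_neg_mul_rpow hσ one_pos hb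
  have hmeas (z u : ℂ) : AEStronglyMeasurable (fun t : ℝ ↦ (t : ℂ) ^ z * exp (-(u * t)))
      (volume.restrict (Ioi 0)) := Measurable.aestronglyMeasurable (by fun_prop)
  have hnhds : {u : ℂ | w.re / 2 < u.re} ∈ 𝓝 w :=
    (isOpen_lt continuous_const continuous_re).mem_nhds (half_lt_self hw)
  refine (hasDerivAt_integral_of_dominated_loc_of_deriv_le (μ := volume.restrict (Ioi (0 : ℝ)))
    (F := fun u t ↦ (t : ℂ) ^ (s - 1) * exp (-(u * t)))
    (F' := fun u t ↦ -((t : ℂ) ^ s * exp (-(u * t))))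
    (bound := fun t ↦ t ^ s.re * Real.exp (-(w.re / 2) * t)) hnhds
    (.of_forall fun u ↦ hmeas _ u) ?_ (hmeas _ w).neg ?_
    (hint (by linarith) (half_pos hw)) ?_).2.differentiableAt.differentiableWithinAt
  · refine (hint (σ := (s - 1).re) (by simpa using hs) hw).mono' (hmeas _ w) ?_
    filter_upwards [ae_restrict_mem measurableSet_Ioi] with t ht using (hnorm _ ht w).le
  · filter_upwards [ae_restrict_mem measurableSet_Ioi] with t ht u hu
    rw [norm_neg, hnorm _ ht]
    have ht : 0 < t := ht
    have : w.re / 2 < u.re := hu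
    gcongr
  · filter_upwards [ae_restrict_mem measurableSet_Ioi] with t ht u _
    have ht : (t : ℂ) ≠ 0 := ofReal_ne_zero.2 (ne_of_gt ht)
    refine ((hasDerivAt_mul_const (t : ℂ)).fun_neg.cexp.const_mul _).congr_deriv ?_
    rw [cpow_sub _ _ ht, cpow_one]
    field_simp

theorem integral_cpow_mul_exp_neg_mul_Ioi_of_re_pos {s w : ℂ} (hs : 0 < s.re) (hw : 0 < w.re) :
    ∫ t : ℝ in Ioi 0, t ^ (s - 1) * exp (-(w * t)) = (1 / w) ^ s * Gamma s := by
  have hopen : IsOpen {w : ℂ | 0 < w.re} := isOpen_lt continuous_const continuous_re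
  have hrhs : DifferentiableOn ℂ (fun w : ℂ ↦ (1 / w) ^ s * Gamma s) {w | 0 < w.re} := by
    intro w (hw : 0 < w.re)
    have hw0 : w ≠ 0 := fun h ↦ by simp [h] at hw
    have hslit : 1 / w ∈ slitPlane := by
      refine Or.inl ?_
      rw [one_div, inv_re]
      exact div_pos hw (normSq_pos.2 hw0)
    have hinv : DifferentiableAt ℂ (fun w : ℂ ↦ 1 / w) w := by fun_prop (disch := exact hw0)
    exact ((hinv.cpow_const hslit).mul_const _).differentiableWithinAt
  have hreal : Tendsto ((↑) : ℝ → ℂ) (𝓝[>] 1) (𝓝[≠] 1) :=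
    tendsto_nhdsWithin_iff.2 ⟨(continuous_ofReal.tendsto' 1 1 ofReal_one).mono_left
      nhdsWithin_le_nhds, by
        filter_upwards [self_mem_nhdsWithin] with x hx
        exact ofReal_ne_one.2 (mem_Ioi.1 hx).ne'⟩
  refine ((differentiableOn_integral_cpow_mul_exp_neg_mul hs).analyticOnNhd hopen
    |>.eqOn_of_preconnected_of_frequently_eq (hrhs.analyticOnNhd hopen)
    (convex_halfSpace_re_gt 0).isPreconnected (z₀ := 1) (by simp) ?_) hw
  refine hreal.frequently (Eventually.frequently ?_)
  filter_upwards [self_mem_nhdsWithin] with x (hx : 1 < x)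
  exact integral_cpow_mul_exp_neg_mul_Ioi hs (by linarith)

lemma exists_rpow_le_mul_exp {p δ : ℝ} (hp : 0 ≤ p) (hδ : 0 < δ) :
    ∃ C, ∀ x, 0 ≤ x → x ^ p ≤ C * Real.exp (δ * x) := by
  have hq : 0 < p + 1 := by linarith
  refine ⟨((p + 1) / δ) ^ p, fun x hx ↦ ?_⟩
  have hlin : x ≤ (p + 1) / δ * Real.exp (δ * x / (p + 1)) := by
    calc x = (p + 1) / δ * (δ * x / (p + 1)) := by field_simp
      _ ≤ _ := mul_le_mul_of_nonneg_left
        (by linarith [Real.add_one_le_exp (δ * x / (p + 1))]) (by positivity)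
  calc x ^ p ≤ ((p + 1) / δ * Real.exp (δ * x / (p + 1))) ^ p := by gcongr
    _ = ((p + 1) / δ) ^ p * Real.exp (δ * (p / (p + 1) * x)) := by
      rw [Real.mul_rpow (by positivity) (by positivity), ← Real.exp_mul]; congr 2; ring
    _ ≤ _ := by
      have hle : p / (p + 1) ≤ 1 := (div_le_one hq).2 (by linarith)
      gcongr
      exact mul_le_of_le_one_left hx hle

lemma exists_rpow_le_mul_exp_of_le {m δ : ℝ} (hm : 0 < m) (p : ℝ) (hδ : 0 < δ) :
    ∃ C, ∀ x, m ≤ x → x ^ p ≤ C * Real.exp (δ * x) := by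
  rcases le_total 0 p with hp | hp
  · obtain ⟨C, hC⟩ := exists_rpow_le_mul_exp hp hδ
    exact ⟨C, fun x hx ↦ hC x (hm.le.trans hx)⟩
  · refine ⟨m ^ p, fun x hx ↦ (Real.rpow_le_rpow_of_nonpos hm hx hp).trans ?_⟩
    have hx0 : 0 ≤ x := hm.le.trans hx
    exact le_mul_of_one_le_right (by positivity) (Real.one_le_exp (by positivity))

lemma exists_mul_rpow_le_mul_add {β K ε : ℝ} (hβ₀ : 0 ≤ β) (hβ₁ : β < 1) (hK : 0 ≤ K)
    (hε : 0 < ε) : ∃ C, ∀ x, 0 ≤ x → K * x ^ β ≤ ε * x + C := by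
  set μ := (K / ε ^ β) ^ (1 / (1 - β))
  refine ⟨(1 - β) * μ, fun x hx ↦ ?_⟩
  have hμ : μ ^ (1 - β) = K / ε ^ β := by
    rw [← Real.rpow_mul (by positivity), one_div_mul_cancel (by linarith), Real.rpow_one]
  calc K * x ^ β = (ε * x) ^ β * μ ^ (1 - β) := by
        rw [hμ, Real.mul_rpow hε.le hx]; field_simp
    _ ≤ β * (ε * x) + (1 - β) * μ :=
        Real.geom_mean_le_arith_mean2_weighted hβ₀ (by linarith) (by positivity) (by positivity)
          (by ring)
    _ ≤ ε * x + (1 - β) * μ :=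
        add_le_add_left (mul_le_of_le_one_left (by positivity) hβ₁.le) _

/-- The ray with vertex `a` and direction `ω`. For `ω` in the open second quadrant it is the upper
half of a Hankel contour, the lower half being its mirror image in the real axis. -/
noncomputable def hankelRay (ω : ℂ) (a r : ℝ) : ℂ := a + r * ω

/-- The Bromwich integral `(2πi)⁻¹ ∫ f(σ) e^σ dσ` over the Hankel contour with vertex `a` and upper
half in direction `ω`, for `f` commuting with complex conjugation: the two halves of the contour
then contribute conjugate values, so that the integral is `π⁻¹` times the imaginary part of its
upper half. -/
noncomputable def hankelIntegral (ω : ℂ) (a : ℝ) (f : ℂ → ℂ) : ℝ :=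
  (∫ r in Ioi (0 : ℝ), f (hankelRay ω a r) * exp (hankelRay ω a r) * ω).im / π

variable {ω : ℂ} {a : ℝ}

lemma hankelRay_re (ω : ℂ) (a r : ℝ) : (hankelRay ω a r).re = a + r * ω.re := by
  simp [hankelRay]

lemma hankelRay_im (ω : ℂ) (a r : ℝ) : (hankelRay ω a r).im = r * ω.im := by
  simp [hankelRay]

@[fun_prop]
lemma measurable_hankelRay (ω : ℂ) (a : ℝ) : Measurable (hankelRay ω a) := by
  unfold hankelRay
  fun_prop

lemma hasDerivAt_hankelRay (ω : ℂ) (a r : ℝ) : HasDerivAt (hankelRay ω a) ω r := by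
  unfold hankelRay
  simpa using ((hasDerivAt_id r).ofReal_comp.mul_const ω).const_add (a : ℂ)

lemma hasDerivAt_hankelRay_vertex (ω : ℂ) (a r : ℝ) :
    HasDerivAt (fun x ↦ hankelRay ω x r) 1 a := by
  unfold hankelRay
  simpa using ((hasDerivAt_id a).ofReal_comp).add_const ((r : ℂ) * ω)

lemma norm_hankelRay_le {r : ℝ} (ω : ℂ) (ha : 0 ≤ a) (hr : 0 ≤ r) :
    ‖hankelRay ω a r‖ ≤ a + r * ‖ω‖ := by
  simpa [hankelRay, abs_of_nonneg ha, abs_of_nonneg hr] using norm_add_le (a : ℂ) (r * ω)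

lemma mul_im_div_norm_le_norm_hankelRay (ω : ℂ) (a r : ℝ) :
    a * ω.im / ‖ω‖ ≤ ‖hankelRay ω a r‖ := by
  refine div_le_of_le_mul₀ (norm_nonneg _) (norm_nonneg _) ?_
  calc a * ω.im = -(hankelRay ω a r * (starRingEnd ℂ) ω).im := by
        rw [mul_im, conj_re, conj_im, hankelRay_re, hankelRay_im]
        ring
    _ ≤ ‖hankelRay ω a r * (starRingEnd ℂ) ω‖ := (neg_le_abs _).trans (abs_im_le_norm _)
    _ = ‖hankelRay ω a r‖ * ‖ω‖ := by rw [norm_mul, norm_conj]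

lemma mul_im_div_norm_pos (him : 0 < ω.im) (ha : 0 < a) : 0 < a * ω.im / ‖ω‖ :=
  div_pos (mul_pos ha him) (norm_pos_iff.2 fun h ↦ by simp [h] at him)

lemma hankelRay_mem_slitPlane {r : ℝ} (him : 0 < ω.im) (hr : 0 < r) :
    hankelRay ω a r ∈ slitPlane :=
  Or.inr (by rw [hankelRay_im]; positivity)

lemma hankelRay_mem_slitPlane_of_pos {r : ℝ} (him : 0 < ω.im) (ha : 0 < a) (hr : 0 ≤ r) :
    hankelRay ω a r ∈ slitPlane := by
  rcases hr.eq_or_lt with rfl | hr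
  · exact Or.inl (by simpa [hankelRay_re] using ha)
  · exact hankelRay_mem_slitPlane him hr

lemma arg_hankelRay_le (him : 0 < ω.im) (ha : 0 < a) (r : ℝ) :
    (hankelRay ω a r).arg ≤ ω.arg := by
  by_contra! hlt
  have hsin : 0 ≤ Real.sin ((hankelRay ω a r).arg - ω.arg) :=
    Real.sin_nonneg_of_nonneg_of_le_pi (by linarith)
      (by linarith [arg_le_pi (hankelRay ω a r), arg_nonneg_iff.2 him.le])
  have hdet : ‖hankelRay ω a r‖ * ‖ω‖ * Real.sin ((hankelRay ω a r).arg - ω.arg)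
      = -(a * ω.im) := by
    calc _ = ‖hankelRay ω a r‖ * Real.sin (hankelRay ω a r).arg * (‖ω‖ * Real.cos ω.arg)
          - ‖hankelRay ω a r‖ * Real.cos (hankelRay ω a r).arg * (‖ω‖ * Real.sin ω.arg) := by
          rw [Real.sin_sub]; ring
      _ = _ := by
          simp only [norm_mul_sin_arg, norm_mul_cos_arg, hankelRay_re, hankelRay_im]; ring
  have : 0 ≤ ‖hankelRay ω a r‖ * ‖ω‖ * Real.sin ((hankelRay ω a r).arg - ω.arg) := by positivity
  linarith [mul_pos ha him]

lemma norm_rpow_mul_cos_le_re_cpow {z : ℂ} {β θ : ℝ} (hβ : 0 ≤ β) (hz : 0 ≤ z.im)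
    (hθ : z.arg ≤ θ) (hβθ : θ * β ≤ π) : ‖z‖ ^ β * Real.cos (θ * β) ≤ (z ^ (β : ℂ)).re := by
  rw [cpow_ofReal_re]
  have harg : 0 ≤ z.arg := arg_nonneg_iff.2 hz
  gcongr
  exact Real.cos_le_cos_of_nonneg_of_le_pi (by positivity) hβθ (by gcongr)

lemma exists_re_add_mul_norm_hankelRay_le (hre : ω.re < 0) :
    ∃ δ > 0, ∀ a r : ℝ, 0 ≤ a → 0 ≤ r →
      (hankelRay ω a r).re + δ * ‖hankelRay ω a r‖ ≤ (1 + δ) * a + ω.re / 2 * r := by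
  have hω : 0 < ‖ω‖ := norm_pos_iff.2 fun h ↦ by simp [h] at hre
  refine ⟨-ω.re / (2 * ‖ω‖), div_pos (neg_pos.2 hre) (by positivity), fun a r ha hr ↦ ?_⟩
  have hδ : 0 ≤ -ω.re / (2 * ‖ω‖) := div_nonneg (neg_nonneg.2 hre.le) (by positivity)
  calc (hankelRay ω a r).re + -ω.re / (2 * ‖ω‖) * ‖hankelRay ω a r‖
      ≤ (a + r * ω.re) + -ω.re / (2 * ‖ω‖) * (a + r * ‖ω‖) := by
        rw [hankelRay_re]; gcongr; exact norm_hankelRay_le ω ha hr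
    _ = _ := by field_simp; ring

lemma integrableOn_of_norm_le_exp_hankelRay {E : Type*} [NormedAddCommGroup E] {g : ℝ → E}
    (hre : ω.re < 0) (ha : 0 ≤ a) (hg : AEStronglyMeasurable g (volume.restrict (Ioi 0)))
    (hbound : ∀ δ > 0, ∃ C, ∀ r > 0,
      ‖g r‖ ≤ C * Real.exp ((hankelRay ω a r).re + δ * ‖hankelRay ω a r‖)) :
    IntegrableOn g (Ioi 0) := by
  obtain ⟨δ, hδ, hdecay⟩ := exists_re_add_mul_norm_hankelRay_le hre
  obtain ⟨C, hC⟩ := hbound δ hδ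
  have hdom : IntegrableOn (fun r : ℝ ↦ |C| * Real.exp ((1 + δ) * a) * Real.exp (ω.re / 2 * r))
      (Ioi 0) := (integrableOn_exp_mul_Ioi (by linarith) 0).const_mul _
  refine hdom.mono' hg ?_
  filter_upwards [ae_restrict_mem measurableSet_Ioi] with r hr
  calc ‖g r‖ ≤ |C| * Real.exp ((1 + δ) * a + ω.re / 2 * r) :=
        (hC r hr).trans <| mul_le_mul (le_abs_self C)
          (Real.exp_le_exp.2 (hdecay a r ha (le_of_lt hr))) (by positivity) (abs_nonneg C)
    _ = _ := by rw [Real.exp_add, mul_assoc]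

lemma integrableOn_comp_norm_mul_exp_hankelRay (hre : ω.re < 0) (ha : 0 ≤ a) {B : ℝ → ℝ}
    (hB : Measurable B)
    (hbound : ∀ δ > 0, ∃ C, ∀ x, a * ω.im / ‖ω‖ ≤ x → |B x| ≤ C * Real.exp (δ * x)) :
    IntegrableOn (fun r ↦ B ‖hankelRay ω a r‖ * Real.exp (hankelRay ω a r).re) (Ioi 0) := by
  refine integrableOn_of_norm_le_exp_hankelRay hre ha
    (Measurable.aestronglyMeasurable (by fun_prop)) fun δ hδ ↦ ?_
  refine (hbound δ hδ).imp fun C hC r _ ↦ ?_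
  rw [norm_mul, Real.norm_eq_abs, Real.norm_of_nonneg (Real.exp_nonneg _), add_comm, Real.exp_add,
    ← mul_assoc]
  gcongr
  exact hC _ (mul_im_div_norm_le_norm_hankelRay ω a r)

lemma integrableOn_cpow_mul_exp_hankelRay (hre : ω.re < 0) (him : 0 < ω.im) (ha : 0 < a) (p : ℝ) :
    IntegrableOn (fun r ↦ hankelRay ω a r ^ (p : ℂ) * exp (hankelRay ω a r)) (Ioi 0) := by
  have hm := mul_im_div_norm_pos him ha
  refine (integrableOn_comp_norm_mul_exp_hankelRay hre ha.le (B := (· ^ p)) (by fun_prop)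
    fun δ hδ ↦ (exists_rpow_le_mul_exp_of_le hm p hδ).imp fun C hC x hx ↦ ?_).mono'
    (Measurable.aestronglyMeasurable (by fun_prop)) (.of_forall fun r ↦ ?_)
  · rw [abs_of_nonneg (Real.rpow_nonneg (hm.le.trans hx) p)]
    exact hC x hx
  · rw [norm_mul, norm_cpow_real, norm_exp]

lemma hasDerivAt_cpow_mul_exp (p : ℝ) {z : ℂ} (hz : z ∈ slitPlane) :
    HasDerivAt (fun w ↦ w ^ (p : ℂ) * exp w)
      (z ^ (p : ℂ) * exp z + p * (z ^ ((p - 1 : ℝ) : ℂ) * exp z)) z := by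
  refine ((hasDerivAt_id z).cpow_const hz |>.mul (hasDerivAt_exp z)).congr_deriv ?_
  push_cast
  simp only [id, mul_one]
  ring

lemma integral_deriv_comp_hankelRay (him : 0 < ω.im) (ha : 0 < a) {F F' : ℂ → ℂ}
    (hderiv : ∀ z ∈ slitPlane, HasDerivAt F (F' z) z)
    (hF : IntegrableOn (fun r ↦ F (hankelRay ω a r)) (Ioi 0))
    (hF' : IntegrableOn (fun r ↦ F' (hankelRay ω a r) * ω) (Ioi 0)) :
    ∫ r in Ioi 0, F' (hankelRay ω a r) * ω = -F a := by
  have hd (r : ℝ) (hr : r ∈ Ici 0) :=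
    (hderiv _ (hankelRay_mem_slitPlane_of_pos him ha hr)).comp r (hasDerivAt_hankelRay ω a r)
  rw [integral_Ioi_of_hasDerivAt_of_tendsto' hd hF'
    (tendsto_zero_of_hasDerivAt_of_integrableOn_Ioi (fun r hr ↦ hd r (mem_Ioi.1 hr).le) hF' hF)]
  simp [hankelRay]

lemma hankelIntegral_cpow_eq_neg_mul (hre : ω.re < 0) (him : 0 < ω.im) (ha : 0 < a) (p : ℝ) :
    hankelIntegral ω a (· ^ (p : ℂ)) =
      -p * hankelIntegral ω a (· ^ ((p - 1 : ℝ) : ℂ)) := by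
  have hint (q : ℝ) := integrableOn_cpow_mul_exp_hankelRay hre him ha q
  have hint' := ((hint (p - 1)).mul_const ω).const_mul (p : ℂ)
  have hftc := integral_deriv_comp_hankelRay him ha (fun z ↦ hasDerivAt_cpow_mul_exp p) (hint p)
    (((hint p).add ((hint (p - 1)).const_mul (p : ℂ))).mul_const ω)
  simp only [add_mul, mul_assoc (p : ℂ)] at hftc
  rw [integral_add ((hint p).mul_const ω) hint', integral_const_mul, ← ofReal_cpow ha.le,
    ← ofReal_exp, ← ofReal_mul] at hftc
  have him₀ := congrArg im hftc
  rw [← ofReal_neg, ofReal_im, add_im, im_ofReal_mul] at him₀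
  unfold hankelIntegral
  linear_combination him₀ / π

lemma integrable_prod_comp_hankelRay (hre : ω.re < 0) {F : ℂ → ℂ} (hmeas : Measurable F)
    (hbound : ∀ δ > 0, ∃ C, ∀ z ∈ slitPlane, ‖F z‖ ≤ C * Real.exp (z.re + δ * ‖z‖))
    (him : 0 < ω.im) (a : ℝ) :
    Integrable (fun q : ℝ × ℝ ↦ F (hankelRay ω q.1 q.2))
      ((volume.restrict (Ioc 0 a)).prod (volume.restrict (Ioi 0))) := by
  obtain ⟨δ, hδ, hdecay⟩ := exists_re_add_mul_norm_hankelRay_le hre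
  obtain ⟨C, hC⟩ := hbound δ hδ
  have hdom : Integrable (fun r : ℝ ↦ |C| * Real.exp ((1 + δ) * a) * Real.exp (ω.re / 2 * r))
      (volume.restrict (Ioi 0)) := (integrableOn_exp_mul_Ioi (by linarith) 0).const_mul _
  have hray : Measurable fun q : ℝ × ℝ ↦ hankelRay ω q.1 q.2 := by
    unfold hankelRay; fun_prop
  refine (hdom.comp_snd (volume.restrict (Ioc 0 a))).mono' (hmeas.comp hray).aestronglyMeasurable ?_
  rw [Measure.prod_restrict]
  filter_upwards [ae_restrict_mem (measurableSet_Ioc.prod measurableSet_Ioi)]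
    with ⟨x, r⟩ ⟨⟨hx₀, hxa⟩, hr⟩
  have hr : 0 < r := hr
  calc ‖F (hankelRay ω x r)‖ ≤ |C| * Real.exp ((1 + δ) * a + ω.re / 2 * r) :=
        (hC _ (hankelRay_mem_slitPlane him hr)).trans <| mul_le_mul (le_abs_self C)
          (Real.exp_le_exp.2 ((hdecay x r hx₀.le hr.le).trans (by gcongr)))
          (by positivity) (abs_nonneg C)
    _ = _ := by rw [Real.exp_add, mul_assoc]

-- Both sides equal the integral of `F' ω` over the strip swept by the rays with vertices in
-- `[0, a]`, which Fubini's theorem lets us evaluate along the rays or along the horizontals.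
lemma integral_hankelRay_sub_integral_hankelRay_zero (hre : ω.re < 0) (him : 0 < ω.im)
    (ha : 0 ≤ a) {F F' : ℂ → ℂ} (hderiv : ∀ z ∈ slitPlane, HasDerivAt F (F' z) z)
    (hF : Measurable F) (hF' : Measurable F')
    (hbound : ∀ δ > 0, ∃ C, ∀ z ∈ slitPlane, ‖F z‖ ≤ C * Real.exp (z.re + δ * ‖z‖))
    (hbound' : ∀ δ > 0, ∃ C, ∀ z ∈ slitPlane, ‖F' z‖ ≤ C * Real.exp (z.re + δ * ‖z‖)) :
    (∫ r in Ioi 0, F (hankelRay ω a r) * ω) - ∫ r in Ioi 0, F (hankelRay ω 0 r) * ω =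
      -∫ x in (0 : ℝ)..a, F x := by
  have hint {G : ℂ → ℂ} (hG : Measurable G) {x : ℝ} (hx : 0 ≤ x) (hGbound : ∀ δ > 0, ∃ C,
      ∀ z ∈ slitPlane, ‖G z‖ ≤ C * Real.exp (z.re + δ * ‖z‖)) :
      IntegrableOn (fun r ↦ G (hankelRay ω x r)) (Ioi 0) :=
    integrableOn_of_norm_le_exp_hankelRay hre hx (Measurable.aestronglyMeasurable (by fun_prop))
      fun δ hδ ↦ (hGbound δ hδ).imp fun C hC r hr ↦ hC _ (hankelRay_mem_slitPlane him hr)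
  have hprod := (integrable_prod_comp_hankelRay hre hF' hbound' him a).mul_const ω
  have hacross (r : ℝ) (hr : r ∈ Ioi 0)
      (hr' : IntegrableOn (fun x ↦ F' (hankelRay ω x r) * ω) (Ioc 0 a)) :
      ∫ x in Ioc 0 a, F' (hankelRay ω x r) * ω =
        F (hankelRay ω a r) * ω - F (hankelRay ω 0 r) * ω := by
    rw [← intervalIntegral.integral_of_le ha]
    refine intervalIntegral.integral_eq_sub_of_hasDerivAt
      (f := fun x ↦ F (hankelRay ω x r) * ω) (fun x _ ↦ ?_)
      ((intervalIntegrable_iff_integrableOn_Ioc_of_le ha).2 hr')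
    simpa using ((hderiv _ (hankelRay_mem_slitPlane him hr)).comp x
      (hasDerivAt_hankelRay_vertex ω x r)).mul_const ω
  calc _ = ∫ r in Ioi 0, (F (hankelRay ω a r) * ω - F (hankelRay ω 0 r) * ω) :=
        (integral_sub ((hint hF ha hbound).mul_const ω)
          ((hint hF le_rfl hbound).mul_const ω)).symm
    _ = ∫ r in Ioi 0, ∫ x in Ioc 0 a, F' (hankelRay ω x r) * ω := by
        refine integral_congr_ae ?_
        filter_upwards [ae_restrict_mem measurableSet_Ioi, hprod.prod_left_ae] with r hr hr'
        exact (hacross r hr hr').symm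
    _ = ∫ x in Ioc 0 a, ∫ r in Ioi 0, F' (hankelRay ω x r) * ω :=
        (integral_integral_swap hprod).symm
    _ = ∫ x in Ioc 0 a, -F x := setIntegral_congr_fun measurableSet_Ioc fun x hx ↦
        integral_deriv_comp_hankelRay him hx.1 hderiv (hint hF hx.1.le hbound)
          ((hint hF' hx.1.le hbound').mul_const ω)
    _ = _ := by rw [integral_neg, intervalIntegral.integral_of_le ha]

lemma exists_norm_cpow_mul_exp_le {p δ : ℝ} (hp : 0 ≤ p) (hδ : 0 < δ) :
    ∃ C, ∀ z : ℂ, ‖z ^ (p : ℂ) * exp z‖ ≤ C * Real.exp (z.re + δ * ‖z‖) := by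
  refine (exists_rpow_le_mul_exp hp hδ).imp fun C hC z ↦ ?_
  rw [norm_mul, norm_cpow_real, norm_exp, add_comm, Real.exp_add, ← mul_assoc]
  gcongr
  exact hC _ (norm_nonneg z)

lemma hankelIntegral_cpow_eq_hankelIntegral_zero (hre : ω.re < 0) (him : 0 < ω.im) (ha : 0 ≤ a)
    {p : ℝ} (hp : 1 ≤ p) :
    hankelIntegral ω a (· ^ (p : ℂ)) = hankelIntegral ω 0 (· ^ (p : ℂ)) := by
  have hshift := integral_hankelRay_sub_integral_hankelRay_zero hre him ha
    (fun z ↦ hasDerivAt_cpow_mul_exp p) (by fun_prop) (by fun_prop)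
    (fun δ hδ ↦ (exists_norm_cpow_mul_exp_le (by linarith) hδ).imp fun C hC z _ ↦ hC z)
    fun δ hδ ↦ by
      obtain ⟨C, hC⟩ := exists_norm_cpow_mul_exp_le (p := p) (by linarith) hδ
      obtain ⟨C', hC'⟩ := exists_norm_cpow_mul_exp_le (sub_nonneg.2 hp) hδ
      refine ⟨C + p * C', fun z _ ↦ ?_⟩
      rw [add_mul, mul_assoc]
      refine norm_add_le_of_le (hC z) ?_
      rw [norm_mul, norm_real, Real.norm_of_nonneg (by linarith)]
      gcongr
      exact hC' z
  have hreal : ∫ x in (0 : ℝ)..a, (x : ℂ) ^ (p : ℂ) * exp x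
      = ↑(∫ x in (0 : ℝ)..a, x ^ p * Real.exp x) := by
    rw [← intervalIntegral.integral_ofReal]
    refine intervalIntegral.integral_congr fun x hx ↦ ?_
    rw [uIcc_of_le ha] at hx
    simp [ofReal_cpow hx.1]
  have him₀ := congrArg im hshift
  rw [hreal, ← ofReal_neg, ofReal_im, sub_im] at him₀
  unfold hankelIntegral
  rw [sub_eq_zero.1 him₀]

lemma ofReal_mul_cpow {r : ℝ} (hr : 0 < r) {z : ℂ} (hz : z ≠ 0) (p : ℂ) :
    ((r : ℂ) * z) ^ p = (r : ℂ) ^ p * z ^ p := by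
  have hr₀ : (r : ℂ) ≠ 0 := ofReal_ne_zero.2 hr.ne'
  rw [cpow_def_of_ne_zero (mul_ne_zero hr₀ hz), log_ofReal_mul hr hz, ofReal_log hr.le, add_mul,
    exp_add, cpow_def_of_ne_zero hr₀, cpow_def_of_ne_zero hz]

lemma cpow_mul_one_div_neg_cpow (him : 0 < ω.im) (p : ℂ) :
    ω ^ p * (1 / -ω) ^ p = exp (p * (π * I)) := by
  have hω : ω ≠ 0 := fun h ↦ by simp [h] at him
  have harg : (-ω).arg ≠ π := by
    rw [arg_neg_eq_arg_sub_pi_of_im_pos him]; linarith [arg_le_pi ω, Real.pi_pos]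
  have hlog : log ω - log (-ω) = π * I := by
    rw [log, log, norm_neg, arg_neg_eq_arg_sub_pi_of_im_pos him]
    push_cast
    ring
  rw [one_div, inv_cpow _ _ harg, ← cpow_neg, cpow_def_of_ne_zero hω,
    cpow_def_of_ne_zero (neg_ne_zero.2 hω), ← exp_add, ← hlog]
  ring_nf

lemma hankelIntegral_zero_cpow (hre : ω.re < 0) (him : 0 < ω.im) {p : ℝ} (hp : -1 < p) :
    hankelIntegral ω 0 (· ^ (p : ℂ)) = 1 / Real.Gamma (-p) := by
  have hω : ω ≠ 0 := fun h ↦ by simp [h] at him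
  have hrotate : ∫ r in Ioi (0 : ℝ), hankelRay ω 0 r ^ (p : ℂ) * exp (hankelRay ω 0 r) * ω
      = exp (((p + 1) * π : ℝ) * I) * Real.Gamma (p + 1) := by
    calc _ = ω ^ ((p + 1 : ℝ) : ℂ) *
          ∫ r in Ioi (0 : ℝ), (r : ℂ) ^ (((p + 1 : ℝ) : ℂ) - 1) * exp (-(-ω * r)) := by
          rw [← integral_const_mul]
          refine setIntegral_congr_fun measurableSet_Ioi fun r hr ↦ ?_
          have hr : 0 < r := hr
          simp only [hankelRay, ofReal_zero, zero_add, ofReal_add, ofReal_one, add_sub_cancel_right,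
            cpow_add _ _ hω, cpow_one, neg_mul, neg_neg,
            ofReal_mul_cpow hr hω, mul_comm ω (r : ℂ)]
          ring
      _ = ω ^ ((p + 1 : ℝ) : ℂ) * (1 / -ω) ^ ((p + 1 : ℝ) : ℂ) * Gamma ((p + 1 : ℝ) : ℂ) := by
          rw [integral_cpow_mul_exp_neg_mul_Ioi_of_re_pos
            (by rw [ofReal_re]; linarith) (by simpa using hre), mul_assoc]
      _ = _ := by rw [cpow_mul_one_div_neg_cpow him, Gamma_ofReal]; push_cast; ring_nf
  have hreflect : Real.Gamma (p + 1) * Real.Gamma (-p) = π / Real.sin (π * (p + 1)) := by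
    rw [← Real.Gamma_mul_Gamma_one_sub]; ring_nf
  have hΓ : Real.Gamma (p + 1) ≠ 0 := (Real.Gamma_pos_of_pos (by linarith)).ne'
  rw [hankelIntegral, hrotate, mul_comm, im_ofReal_mul, exp_ofReal_mul_I_im,
    eq_div_of_mul_eq hΓ ((mul_comm _ _).trans hreflect), mul_comm (p + 1)]
  field_simp

lemma continuous_hankelIntegral_cpow (hre : ω.re < 0) (him : 0 < ω.im) (ha : 0 < a) :
    Continuous fun p : ℝ ↦ hankelIntegral ω a (· ^ (p : ℂ)) := by
  let k (p r : ℝ) : ℂ := hankelRay ω a r ^ (p : ℂ) * exp (hankelRay ω a r) * ω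
  suffices Continuous fun p ↦ ∫ r in Ioi 0, k p r from
    (continuous_im.comp this).div_const π
  refine continuous_iff_continuousAt.2 fun q ↦ ?_
  have hint (p : ℝ) : IntegrableOn (k p) (Ioi 0) :=
    (integrableOn_cpow_mul_exp_hankelRay hre him ha p).mul_const ω
  refine continuousAt_of_dominated (bound := fun r ↦ ‖k (q - 1) r‖ + ‖k (q + 1) r‖)
    (.of_forall fun p ↦ (hint p).aestronglyMeasurable) ?_ ((hint _).norm.add (hint _).norm) ?_
  · filter_upwards [Ioo_mem_nhds (sub_one_lt q) (lt_add_one q)] with p hp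
    filter_upwards [ae_restrict_mem measurableSet_Ioi] with r hr
    have hσ : 0 < ‖hankelRay ω a r‖ :=
      norm_pos_iff.2 (slitPlane_ne_zero (hankelRay_mem_slitPlane him hr))
    simp only [k, norm_mul, norm_cpow_real, ← add_mul]
    gcongr
    rcases le_total 1 ‖hankelRay ω a r‖ with h | h
    · exact (Real.rpow_le_rpow_of_exponent_le h hp.2.le).trans
        (le_add_of_nonneg_left (by positivity))
    · exact (Real.rpow_le_rpow_of_exponent_ge hσ h hp.1.le).trans
        (le_add_of_nonneg_right (by positivity))
  · filter_upwards [ae_restrict_mem measurableSet_Ioi] with r hr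
    have hσ := slitPlane_ne_zero (hankelRay_mem_slitPlane (a := a) him hr)
    exact ((continuousAt_const_cpow hσ).comp continuous_ofReal.continuousAt).mul_const _
      |>.mul_const _

lemma continuous_one_div_realGamma : Continuous fun x : ℝ ↦ 1 / Real.Gamma x := by
  have h := continuous_re.comp
    (Complex.differentiable_one_div_Gamma.continuous.comp continuous_ofReal)
  refine h.congr fun x ↦ ?_
  simp [Gamma_ofReal, ← ofReal_inv]

lemma one_div_realGamma_neg (p : ℝ) :
    1 / Real.Gamma (-p) = -p * (1 / Real.Gamma (-(p - 1))) := by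
  rcases eq_or_ne p 0 with rfl | hp
  · simp
  · rw [show -(p - 1) = -p + 1 by ring, Real.Gamma_add_one (neg_ne_zero.2 hp)]
    field_simp

-- At `p = 0` the recurrence says nothing about `D (-1)`, so it only reaches irrational arguments;
-- the others are limits of these.
lemma eq_zero_of_continuous_of_recurrence {D : ℝ → ℝ} (hcont : Continuous D)
    (hrec : ∀ p, D p = -p * D (p - 1)) (hone : ∀ p, 1 ≤ p → D p = 0) : D = 0 := by
  have hirr (n : ℕ) : ∀ p, Irrational p → 1 ≤ p + n → D p = 0 := by
    induction n with
    | zero => exact fun p _ hp ↦ hone p (by simpa using hp)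
    | succ n ih =>
      intro p hp hpn
      have hsucc : Irrational (p + 1) := mod_cast hp.add_natCast 1
      have h := hrec (p + 1)
      rw [ih _ hsucc (by push_cast at hpn; linarith), add_sub_cancel_right] at h
      exact (mul_eq_zero.1 h.symm).resolve_left (neg_ne_zero.2 hsucc.ne_zero)
  refine hcont.ext_on dense_irrational continuous_const fun p hp ↦ ?_
  obtain ⟨n, hn⟩ := exists_nat_ge (1 - p)
  exact hirr n p hp (by linarith)

theorem hankelIntegral_cpow (hre : ω.re < 0) (him : 0 < ω.im) (ha : 0 < a) (p : ℝ) :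
    hankelIntegral ω a (· ^ (p : ℂ)) = 1 / Real.Gamma (-p) := by
  refine sub_eq_zero.1 (congrFun (eq_zero_of_continuous_of_recurrence
    (D := fun p : ℝ ↦ hankelIntegral ω a (· ^ (p : ℂ)) - 1 / Real.Gamma (-p))
    ((continuous_hankelIntegral_cpow hre him ha).sub
      (continuous_one_div_realGamma.comp continuous_neg)) (fun q ↦ ?_) fun q hq ↦ ?_) p)
  · rw [hankelIntegral_cpow_eq_neg_mul hre him ha, one_div_realGamma_neg, mul_sub]
  · rw [hankelIntegral_cpow_eq_hankelIntegral_zero hre him ha.le hq,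
      hankelIntegral_zero_cpow hre him (by linarith), sub_self]

lemma hankelIntegral_congr {f g : ℂ → ℂ} (h : ∀ r > 0, f (hankelRay ω a r) = g (hankelRay ω a r)) :
    hankelIntegral ω a f = hankelIntegral ω a g := by
  unfold hankelIntegral
  rw [setIntegral_congr_fun measurableSet_Ioi fun r hr ↦ ?_]
  simp only [h r hr]

lemma hasSum_hankelIntegral_cpow (hre : ω.re < 0) (him : 0 < ω.im) (ha : 0 < a) (p γ : ℝ)
    {c : ℕ → ℝ} {g : ℂ → ℂ} {A : ℝ → ℝ}
    (hg : ∀ σ : ℂ, a * ω.im / ‖ω‖ ≤ ‖σ‖ → HasSum (fun n ↦ c n * (σ ^ (γ : ℂ)) ^ n) (g σ))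
    (hA : ∀ x, a * ω.im / ‖ω‖ ≤ x → HasSum (fun n ↦ |c n| * (x ^ γ) ^ n) (A x))
    (hmeas : Measurable A)
    (hbound : ∀ δ > 0, ∃ C, ∀ x, a * ω.im / ‖ω‖ ≤ x → |x ^ p * A x| ≤ C * Real.exp (δ * x)) :
    HasSum (fun n ↦ c n / Real.Gamma (-(p + γ * n)))
      (hankelIntegral ω a fun σ ↦ σ ^ (p : ℂ) * g σ) := by
  have hint := integrableOn_comp_norm_mul_exp_hankelRay hre ha.le (by fun_prop) hbound
  have hm (r : ℝ) := mul_im_div_norm_le_norm_hankelRay ω a r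
  let k (n : ℕ) (r : ℝ) : ℂ :=
    c n * (hankelRay ω a r ^ ((p + γ * n : ℝ) : ℂ) * exp (hankelRay ω a r) * ω)
  let b (n : ℕ) (r : ℝ) : ℝ := ‖hankelRay ω a r‖ ^ p * (|c n| * (‖hankelRay ω a r‖ ^ γ) ^ n) *
    Real.exp (hankelRay ω a r).re * ‖ω‖
  have hb (r : ℝ) : HasSum (b · r) (‖hankelRay ω a r‖ ^ p * A ‖hankelRay ω a r‖ *
      Real.exp (hankelRay ω a r).re * ‖ω‖) :=
    (((hA _ (hm r)).mul_left _).mul_right _).mul_right _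
  have hk (r : ℝ) (hr : 0 < r) : HasSum (k · r)
      (hankelRay ω a r ^ (p : ℂ) * g (hankelRay ω a r) * exp (hankelRay ω a r) * ω) := by
    refine ((((hg _ (hm r)).mul_left _).mul_right _).mul_right _).congr_fun fun n ↦ ?_
    have hσ := slitPlane_ne_zero (hankelRay_mem_slitPlane (a := a) him hr)
    simp only [k]
    push_cast
    rw [cpow_add _ _ hσ, mul_comm (γ : ℂ), cpow_nat_mul]
    ring
  have hsum : HasSum (fun n ↦ ∫ r in Ioi 0, k n r) _ :=
    hasSum_integral_of_dominated_convergence b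
      (fun n ↦ (((integrableOn_cpow_mul_exp_hankelRay hre him ha _).mul_const ω).const_mul
        (c n : ℂ)).aestronglyMeasurable)
      (fun n ↦ ?_)
      (.of_forall fun r ↦ (hb r).summable)
      ((hint.mul_const ‖ω‖).congr (.of_forall fun r ↦ (hb r).tsum_eq.symm))
      ((ae_restrict_mem measurableSet_Ioi).mono fun r hr ↦ hk r hr)
  · refine ((hasSum_im hsum).div_const π).congr_fun fun n ↦ ?_
    rw [integral_const_mul, im_ofReal_mul, mul_div_assoc]
    change _ = c n * hankelIntegral ω a (· ^ ((p + γ * n : ℝ) : ℂ))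
    rw [hankelIntegral_cpow hre him ha, mul_one_div]
  · filter_upwards [ae_restrict_mem measurableSet_Ioi] with r hr
    have hσ := slitPlane_ne_zero (hankelRay_mem_slitPlane (a := a) him hr)
    simp only [k, b, norm_mul, norm_cpow_real, norm_exp, norm_real, Real.norm_eq_abs,
      Real.rpow_add (norm_pos_iff.2 hσ), Real.rpow_mul_natCast (norm_nonneg _)]
    exact le_of_eq (by ring)

lemma exists_rpow_mul_exp_mul_rpow_le {m β K δ : ℝ} (hm : 0 < m) (p : ℝ) (hβ₀ : 0 ≤ β)
    (hβ₁ : β < 1) (hK : 0 ≤ K) (hδ : 0 < δ) :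
    ∃ C, ∀ x, m ≤ x → |x ^ p * Real.exp (K * x ^ β)| ≤ C * Real.exp (δ * x) := by
  obtain ⟨C, hC⟩ := exists_rpow_le_mul_exp_of_le hm p (half_pos hδ)
  obtain ⟨C', hC'⟩ := exists_mul_rpow_le_mul_add hβ₀ hβ₁ hK (half_pos hδ)
  refine ⟨C * Real.exp C', fun x hx ↦ ?_⟩
  have hx₀ : 0 ≤ x := hm.le.trans hx
  rw [abs_of_nonneg (by positivity)]
  calc x ^ p * Real.exp (K * x ^ β) ≤
        C * Real.exp (δ / 2 * x) * Real.exp (δ / 2 * x + C') :=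
        mul_le_mul (hC x hx) (Real.exp_le_exp.2 (hC' x hx₀)) (Real.exp_nonneg _)
          ((by positivity : (0 : ℝ) ≤ x ^ p).trans (hC x hx))
    _ = C * Real.exp C' * Real.exp (δ * x) := by
        simp only [mul_assoc, ← Real.exp_add]; ring_nf

lemma mWright_eq_hankelIntegral (hre : ω.re < 0) (him : 0 < ω.im) (ha : 0 < a) {β : ℝ}
    (hβ₀ : 0 ≤ β) (hβ₁ : β < 1) (z : ℝ) :
    mWright β z =
      hankelIntegral ω a fun σ ↦ σ ^ ((β - 1 : ℝ) : ℂ) * exp (-(z * σ ^ (β : ℂ))) := by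
  have hm := mul_im_div_norm_pos him ha
  have hexp (w : ℂ) : HasSum (fun n : ℕ ↦ (((-z) ^ n / n.factorial : ℝ) : ℂ) * w ^ n)
      (exp (-(z * w))) := by
    rw [exp_eq_exp_ℂ]
    refine (NormedSpace.expSeries_div_hasSum_exp (-(z * w))).congr_fun fun n ↦ ?_
    push_cast
    rw [← neg_mul, mul_pow]
    ring
  have hexp_abs (x : ℝ) : HasSum (fun n : ℕ ↦ |(-z) ^ n / n.factorial| * x ^ n)
      (Real.exp (|z| * x)) := by
    rw [Real.exp_eq_exp_ℝ]
    refine (NormedSpace.expSeries_div_hasSum_exp (|z| * x)).congr_fun fun n ↦ ?_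
    rw [abs_div, abs_pow, abs_neg, Nat.abs_cast, mul_pow]
    ring
  have hsum := hasSum_hankelIntegral_cpow hre him ha (β - 1) β
    (g := fun σ ↦ exp (-(z * σ ^ (β : ℂ)))) (A := fun x ↦ Real.exp (|z| * x ^ β))
    (fun σ _ ↦ hexp _) (fun x _ ↦ hexp_abs _) (by fun_prop) fun δ hδ ↦
      exists_rpow_mul_exp_mul_rpow_le hm (β - 1) hβ₀ hβ₁ (abs_nonneg z) hδ
  rw [← hsum.tsum_eq, mWright]
  refine tsum_congr fun n ↦ ?_
  rw [div_div]
  ring_nf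

lemma exists_rpow_mul_inv_one_sub_mul_rpow_neg_le {m β K δ : ℝ} (hm : 0 < m) (p : ℝ) (hβ : 0 ≤ β)
    (hK : 0 ≤ K) (hKm : K * m ^ (-β) < 1) (hδ : 0 < δ) :
    ∃ C, ∀ x, m ≤ x → |x ^ p * (1 - K * x ^ (-β))⁻¹| ≤ C * Real.exp (δ * x) := by
  obtain ⟨C, hC⟩ := exists_rpow_le_mul_exp_of_le hm p hδ
  refine ⟨C * (1 - K * m ^ (-β))⁻¹, fun x hx ↦ ?_⟩
  have hx₀ : 0 ≤ x := hm.le.trans hx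
  have hle : 1 - K * m ^ (-β) ≤ 1 - K * x ^ (-β) := sub_le_sub_left
    (mul_le_mul_of_nonneg_left (Real.rpow_le_rpow_of_nonpos hm hx (neg_nonpos.2 hβ)) hK) 1
  have hpos : 0 < 1 - K * m ^ (-β) := sub_pos.2 hKm
  have hinv : 0 ≤ (1 - K * x ^ (-β))⁻¹ := inv_nonneg.2 (hpos.le.trans hle)
  rw [abs_of_nonneg (by positivity), mul_right_comm]
  exact mul_le_mul (hC x hx) (inv_anti₀ hpos hle) hinv
    ((by positivity : (0 : ℝ) ≤ x ^ p).trans (hC x hx))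

lemma cpow_sub_one_mul_inv_add_cpow {σ : ℂ} (hσ : σ ≠ 0) (s β : ℂ) :
    σ ^ (β - 1) * (s + σ ^ β)⁻¹ = σ ^ (-1 : ℂ) * (1 - -s * σ ^ (-β))⁻¹ := by
  have hpow : σ ^ β ≠ 0 := cpow_ne_zero_iff.2 (.inl hσ)
  have hfactor : s + σ ^ β = σ ^ β * (1 - -s * σ ^ (-β)) := by
    rw [cpow_neg]; field_simp; ring
  rw [hfactor, mul_inv, sub_eq_add_neg β, cpow_add _ _ hσ, mul_mul_mul_comm, mul_inv_cancel₀ hpow,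
    one_mul]

lemma mittagLefflerReal_eq_hankelIntegral (hre : ω.re < 0) (him : 0 < ω.im) (ha : 0 < a) {β s : ℝ}
    (hβ : 0 ≤ β) (hs : |s| < (a * ω.im / ‖ω‖) ^ β) :
    mittagLefflerReal β (-s) =
      hankelIntegral ω a fun σ ↦ σ ^ ((β - 1 : ℝ) : ℂ) * (s + σ ^ (β : ℂ))⁻¹ := by
  have hm := mul_im_div_norm_pos him ha
  set m := a * ω.im / ‖ω‖
  have hq : |s| * m ^ (-β) < 1 := by
    rwa [Real.rpow_neg hm.le, ← div_eq_mul_inv, div_lt_one (by positivity)]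
  have hlt {x : ℝ} (hx : m ≤ x) : |s| * x ^ (-β) < 1 := hq.trans_le' <|
    mul_le_mul_of_nonneg_left (Real.rpow_le_rpow_of_nonpos hm hx (neg_nonpos.2 hβ)) (abs_nonneg s)
  have hgeom (σ : ℂ) (hσ : m ≤ ‖σ‖) : HasSum (fun n : ℕ ↦
      (((-s) ^ n : ℝ) : ℂ) * (σ ^ ((-β : ℝ) : ℂ)) ^ n) (1 - -s * σ ^ ((-β : ℝ) : ℂ))⁻¹ := by
    have h : ‖-s * σ ^ ((-β : ℝ) : ℂ)‖ < 1 := by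
      rw [norm_mul, norm_neg, norm_real, norm_cpow_real]
      exact hlt hσ
    simpa only [mul_pow, ofReal_pow, ofReal_neg] using hasSum_geometric_of_norm_lt_one h
  have hgeom_abs (x : ℝ) (hx : m ≤ x) : HasSum (fun n : ℕ ↦ |(-s) ^ n| * (x ^ (-β)) ^ n)
      (1 - |s| * x ^ (-β))⁻¹ := by
    have hx₀ : 0 ≤ x := hm.le.trans hx
    simpa only [mul_pow, abs_pow, abs_neg] using
      hasSum_geometric_of_lt_one (by positivity) (hlt hx)
  have hsum := hasSum_hankelIntegral_cpow hre him ha (-1) (-β) hgeom hgeom_abs (by fun_prop)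
    fun δ hδ ↦ exists_rpow_mul_inv_one_sub_mul_rpow_neg_le hm (-1) hβ (abs_nonneg s) hq hδ
  calc mittagLefflerReal β (-s) = ∑' n : ℕ, (-s) ^ n / Real.Gamma (-(-1 + -β * n)) :=
        tsum_congr fun n ↦ by ring_nf
    _ = _ := hsum.tsum_eq
    _ = _ := hankelIntegral_congr fun r hr ↦ by
        have hσ := slitPlane_ne_zero (hankelRay_mem_slitPlane (a := a) him hr)
        push_cast
        exact (cpow_sub_one_mul_inv_add_cpow hσ s β).symm

lemma integrable_prod_exp_neg_mul_mul {α : Type*} [MeasurableSpace α] {μ : Measure α} [SFinite μ]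
    {k w : α → ℂ} (hk : Integrable k μ) (hw : Measurable w) {δ : ℝ} (hδ : 0 < δ)
    (hwδ : ∀ᵐ x ∂μ, δ ≤ (w x).re) :
    Integrable (Function.uncurry fun (t : ℝ) x ↦ exp (-w x * t) * k x)
      ((volume.restrict (Ioi 0)).prod μ) := by
  have hdecay : IntegrableOn (fun t : ℝ ↦ Real.exp (-δ * t)) (Ioi 0) :=
    integrableOn_exp_mul_Ioi (neg_lt_zero.2 hδ) 0
  have hexp : Measurable fun q : ℝ × α ↦ exp (-w q.2 * q.1) := by fun_prop
  refine (hdecay.mul_prod hk.norm).mono' (hexp.aestronglyMeasurable.mul hk.1.comp_snd) ?_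
  filter_upwards [Measure.quasiMeasurePreserving_fst.ae (ae_restrict_mem measurableSet_Ioi),
    Measure.quasiMeasurePreserving_snd.ae hwδ] with ⟨t, x⟩ (ht : 0 < t) hx
  rw [Function.uncurry_apply_pair, norm_mul, norm_exp, re_mul_ofReal, neg_re]
  gcongr

lemma integral_integral_exp_neg_mul_mul {α : Type*} [MeasurableSpace α] {μ : Measure α} [SFinite μ]
    {k w : α → ℂ} (hk : Integrable k μ) (hw : Measurable w) {δ : ℝ} (hδ : 0 < δ)
    (hwδ : ∀ᵐ x ∂μ, δ ≤ (w x).re) :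
    ∫ t : ℝ in Ioi 0, ∫ x, exp (-w x * t) * k x ∂μ = ∫ x, (w x)⁻¹ * k x ∂μ := by
  rw [integral_integral_swap (integrable_prod_exp_neg_mul_mul hk hw hδ hwδ)]
  refine integral_congr_ae (hwδ.mono fun x hx ↦ ?_)
  have hneg : (-w x).re < 0 := by
    rw [neg_re]
    linarith
  simp only
  rw [integral_mul_const, integral_exp_mul_complex_Ioi hneg, ofReal_zero, mul_zero, exp_zero,
    neg_div_neg_eq, one_div]

lemma integral_exp_mul_hankelIntegral {f g : ℂ → ℂ}
    (hf : IntegrableOn (fun r ↦ f (hankelRay ω a r) * exp (hankelRay ω a r) * ω) (Ioi 0))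
    (hg : Measurable g) {s δ : ℝ} (hδ : 0 < δ) (hgδ : ∀ r > 0, δ ≤ s + (g (hankelRay ω a r)).re) :
    ∫ τ in Ioi (0 : ℝ), Real.exp (-s * τ) * hankelIntegral ω a (fun σ ↦ f σ * exp (-(τ * g σ))) =
      hankelIntegral ω a fun σ ↦ f σ * (s + g σ)⁻¹ := by
  let k (r : ℝ) : ℂ := f (hankelRay ω a r) * exp (hankelRay ω a r) * ω
  let w (r : ℝ) : ℂ := s + g (hankelRay ω a r)
  have hw : Measurable w := by fun_prop
  have hwδ : ∀ᵐ r ∂volume.restrict (Ioi 0), δ ≤ (w r).re :=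
    (ae_restrict_mem measurableSet_Ioi).mono fun r hr ↦ by
      simpa only [w, add_re, ofReal_re] using hgδ r hr
  calc _ = ∫ τ in Ioi (0 : ℝ), (∫ r in Ioi 0, exp (-w r * τ) * k r).im / π := by
        refine integral_congr_ae (.of_forall fun τ ↦ ?_)
        simp only [hankelIntegral]
        rw [← mul_div_assoc, ← im_ofReal_mul, ← integral_const_mul]
        congr 3 with r
        simp only [w, k, ofReal_exp, ofReal_mul, ofReal_neg, neg_add, add_mul, exp_add]
        ring_nf
    _ = (∫ τ : ℝ in Ioi 0, ∫ r in Ioi 0, exp (-w r * τ) * k r).im / π := by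
        rw [integral_div]
        exact congrArg (· / π)
          (integral_im (integrable_prod_exp_neg_mul_mul hf hw hδ hwδ).integral_prod_left)
    _ = (∫ r in Ioi 0, (w r)⁻¹ * k r).im / π := by
        rw [integral_integral_exp_neg_mul_mul hf hw hδ hwδ]
    _ = _ := by
        rw [hankelIntegral]
        congr 3 with r
        simp only [w, k]
        ring

lemma exists_re_neg_im_pos_arg_mul_lt {β : ℝ} (hβ₀ : 0 < β) (hβ₁ : β < 1) :
    ∃ ω : ℂ, ω.re < 0 ∧ 0 < ω.im ∧ ω.arg * β < π / 2 := by
  have hπ := Real.pi_pos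
  set φ := π / (1 + β)
  have hφπ : φ < π := div_lt_self hπ (by linarith)
  have hφ : π / 2 < φ := div_lt_div_of_pos_left hπ (by linarith) (by linarith)
  have hφβ : φ * β = π - φ := by unfold φ; field_simp; ring
  refine ⟨exp (φ * I), ?_, ?_, ?_⟩
  · rw [exp_ofReal_mul_I_re]
    exact Real.cos_neg_of_pi_div_two_lt_of_lt hφ (by linarith)
  · rw [exp_ofReal_mul_I_im]
    exact Real.sin_pos_of_pos_of_lt_pi (by linarith) hφπ
  · rw [arg_exp_mul_I, (toIocMod_eq_self _).2 ⟨by linarith, by linarith⟩, hφβ]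
    linarith

lemma exists_pos_lt_mul_rpow_mul {β k c : ℝ} (hβ : 0 < β) (hk : 0 < k) (hc : 0 < c) (s : ℝ) :
    ∃ a > 0, s < (a * k) ^ β * c := by
  have htends : Tendsto (fun a : ℝ ↦ (a * k) ^ β * c) atTop atTop :=
    ((tendsto_rpow_atTop hβ).comp (tendsto_id.atTop_mul_const hk)).atTop_mul_const hc
  exact ((eventually_gt_atTop 0).and (htends.eventually_gt_atTop s)).exists

lemma rpow_mul_cos_le_re_hankelRay_cpow (him : 0 < ω.im) (ha : 0 < a) {β r : ℝ} (hβ : 0 ≤ β)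
    (hωβ : ω.arg * β ≤ π / 2) (hr : 0 ≤ r) :
    (a * ω.im / ‖ω‖) ^ β * Real.cos (ω.arg * β) ≤ (hankelRay ω a r ^ (β : ℂ)).re := by
  have harg : 0 ≤ ω.arg * β := mul_nonneg (arg_nonneg_iff.2 him.le) hβ
  have hcos : 0 ≤ Real.cos (ω.arg * β) :=
    Real.cos_nonneg_of_mem_Icc ⟨by linarith [Real.pi_pos], hωβ⟩
  have him_ray : 0 ≤ (hankelRay ω a r).im := by
    rw [hankelRay_im]
    positivity
  calc _ ≤ ‖hankelRay ω a r‖ ^ β * Real.cos (ω.arg * β) :=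
        mul_le_mul_of_nonneg_right (Real.rpow_le_rpow (mul_im_div_norm_pos him ha).le
          (mul_im_div_norm_le_norm_hankelRay ω a r) hβ) hcos
    _ ≤ _ := norm_rpow_mul_cos_le_re_cpow hβ him_ray (arg_hankelRay_le him ha r)
        (by linarith [Real.pi_pos])

theorem laplace_mWright_eq_mittagLeffler_general (β : ℝ) (hβ₀ : 0 < β) (hβ₁ : β < 1) (s : ℝ) :
    ∫ τ in Ioi (0 : ℝ), Real.exp (-s * τ) * mWright β τ = mittagLefflerReal β (-s) := by
  obtain ⟨ω, hre, him, hω⟩ := exists_re_neg_im_pos_arg_mul_lt hβ₀ hβ₁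
  have hcos : 0 < Real.cos (ω.arg * β) :=
    Real.cos_pos_of_mem_Ioo ⟨by nlinarith [Real.pi_pos, arg_nonneg_iff.2 him.le], hω⟩
  obtain ⟨a, ha, hsa⟩ := exists_pos_lt_mul_rpow_mul hβ₀
    (by simpa using mul_im_div_norm_pos him one_pos : 0 < ω.im / ‖ω‖) hcos |s|
  rw [← mul_div_assoc] at hsa
  have hs : |s| < (a * ω.im / ‖ω‖) ^ β :=
    hsa.trans_le (mul_le_of_le_one_right (by positivity) (Real.cos_le_one _))
  have hlower (r : ℝ) (hr : 0 < r) : (a * ω.im / ‖ω‖) ^ β * Real.cos (ω.arg * β) - |s| ≤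
      s + (hankelRay ω a r ^ (β : ℂ)).re := by
    linarith [rpow_mul_cos_le_re_hankelRay_cpow him ha hβ₀.le hω.le hr.le, neg_abs_le s]
  calc ∫ τ in Ioi (0 : ℝ), Real.exp (-s * τ) * mWright β τ
      = ∫ τ in Ioi (0 : ℝ), Real.exp (-s * τ) *
        hankelIntegral ω a (fun σ ↦ σ ^ ((β - 1 : ℝ) : ℂ) * exp (-(τ * σ ^ (β : ℂ)))) := by
        simp only [mWright_eq_hankelIntegral hre him ha hβ₀.le hβ₁]
    _ = hankelIntegral ω a fun σ ↦ σ ^ ((β - 1 : ℝ) : ℂ) * (s + σ ^ (β : ℂ))⁻¹ :=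
        integral_exp_mul_hankelIntegral (f := fun σ ↦ σ ^ ((β - 1 : ℝ) : ℂ))
          (g := fun σ ↦ σ ^ (β : ℂ))
          ((integrableOn_cpow_mul_exp_hankelRay hre him ha (β - 1)).mul_const ω) (by fun_prop)
          (sub_pos.2 hsa) hlower
    _ = mittagLefflerReal β (-s) :=
        (mittagLefflerReal_eq_hankelIntegral hre him ha hβ₀.le hs).symm

end

/-- The Mittag-Leffler function is the Laplace transform of the M-Wright function:
for `0 < β < 1` and `s ≥ 0`, `∫_0^∞ e^{-sτ} M_β(τ) dτ = E_β(-s)`. -/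
theorem laplace_mWright_eq_mittagLeffler (β : ℝ) (hβ₀ : 0 < β) (hβ₁ : β < 1)
    (s : ℝ) (hs : 0 ≤ s) :
    ∫ τ in Set.Ioi (0 : ℝ), Real.exp (-s * τ) * mWright β τ = mittagLefflerReal β (-s) :=
  laplace_mWright_eq_mittagLeffler_general β hβ₀ hβ₁ s
end

section
/- For all t, s ≥ 0 and all 0 < α < 2, the L²(ℝ) inner product ⟨M_−^{α/2} 1_{[0,t)}, M_−^{α/2} 1_{[0,s)}⟩ equals ½(t^α + s^α − |t − s|^α). -/
open MeasureTheory

/-- Right-sided Riemann–Liouville fractional integral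
`(I_-^r f)(x) = (1/Γ(r)) ∫_x^∞ f(t)(t-x)^{r-1} dt`. -/
noncomputable def fracIntMinus (r : ℝ) (f : ℝ → ℝ) (x : ℝ) : ℝ :=
  (1 / Real.Gamma r) * ∫ t in Set.Ioi x, f t * (t - x) ^ (r - 1)

/-- Right-sided Riemann–Liouville fractional derivative
`(D_-^r f)(x) = (-1/Γ(1-r)) d/dx ∫_x^∞ f(t)(t-x)^{-r} dt`. -/
noncomputable def fracDerivMinus (r : ℝ) (f : ℝ → ℝ) (x : ℝ) : ℝ :=
  -(1 / Real.Gamma (1 - r)) * deriv (fun y => ∫ t in Set.Ioi y, f t * (t - y) ^ (-r)) x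

/-- The normalization constant `K_{α/2} = √(α sin(απ/2) Γ(α))`. -/
noncomputable def Kconst (α : ℝ) : ℝ :=
  Real.sqrt (α * Real.sin (α * Real.pi / 2) * Real.Gamma α)

/-- The operator `M_-^{α/2}` for `0 < α < 2`. -/
noncomputable def Mminus (α : ℝ) (f : ℝ → ℝ) : ℝ → ℝ :=
  if α < 1 then fun x => Kconst α * fracDerivMinus (-(α - 1) / 2) f x
  else if α = 1 then f
  else fun x => Kconst α * fracIntMinus ((α - 1) / 2) f x

/-!
Off the endpoints, `M_-^{α/2} 1_{[a,b)}` is `K_{α/2} / Γ((1+α)/2)` times the Mandelbrot–Van Ness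
increment `x ↦ (b-x)_+^r - (a-x)_+^r` with `r = (α-1)/2`, whatever the sign of `r`. By polarization
and scaling, the inner product is `½(t^α + s^α - |t-s|^α)` times the square of this factor times the
squared `L²` norm of the unit increment `(1+y)_+^r - y_+^r`. On `(0, ∞)` an explicit primitive turns
the square of the unit increment into the beta integrand `u^r (1+u)^{r-2}`, and the duplication and
reflection formulas for `Γ` match the resulting value `Γ(r+1) Γ(1-2r) / ((2r+1) Γ(1-r))` with the
normalization `K_{α/2}`.
-/

open Set Filter Asymptotics Topology

section Beta

variable {a b : ℝ}

lemma integral_Ioo_rpow_mul_one_sub_rpow (ha : 0 < a) (hb : 0 < b) :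
    ∫ x in Ioo (0 : ℝ) 1, x ^ (a - 1) * (1 - x) ^ (b - 1) = ProbabilityTheory.beta a b := by
  have hpos := ProbabilityTheory.beta_pos ha hb
  have hdensity : ∫ x in Ioo (0 : ℝ) 1,
      1 / ProbabilityTheory.beta a b * x ^ (a - 1) * (1 - x) ^ (b - 1) = 1 := by
    rw [integral_eq_lintegral_of_nonneg_ae _ (by fun_prop), ← ProbabilityTheory.lintegral_betaPDF,
      ProbabilityTheory.lintegral_betaPDF_eq_one ha hb, ENNReal.toReal_one]
    refine ae_restrict_of_forall_mem measurableSet_Ioo fun x hx ↦ ?_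
    have := hx.1
    have := sub_pos.2 hx.2
    simp only [Pi.zero_apply]
    positivity
  simp only [mul_assoc, integral_const_mul] at hdensity
  field_simp at hdensity
  exact hdensity

lemma integral_Ioi_rpow_mul_one_add_rpow (ha : 0 < a) (hb : 0 < b) :
    ∫ u in Ioi (0 : ℝ), u ^ (a - 1) * (1 + u) ^ (-(a + b)) =
      Real.Gamma a * Real.Gamma b / Real.Gamma (a + b) := by
  have himage : (fun u : ℝ ↦ (1 + u)⁻¹) '' Ioi 0 = Ioo 0 1 := by
    rw [← image_image (fun v : ℝ ↦ v⁻¹), image_const_add_Ioi, add_zero, image_inv_eq_inv,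
      inv_Ioi₀ one_pos, inv_one]
  have hderiv : ∀ u ∈ Ioi (0 : ℝ),
      HasDerivWithinAt (fun u : ℝ ↦ (1 + u)⁻¹) (-1 / (1 + u) ^ 2) (Ioi 0) u := fun u hu ↦
    (((hasDerivAt_id u).const_add 1).fun_inv
      (by linarith [mem_Ioi.1 hu, id_eq u])).hasDerivWithinAt
  have hanti : AntitoneOn (fun u : ℝ ↦ (1 + u)⁻¹) (Ioi 0) := fun u hu v _ huv ↦
    inv_anti₀ (by linarith [mem_Ioi.1 hu]) (by linarith)
  have hsubst := integral_image_eq_integral_deriv_smul_of_antitoneOn measurableSet_Ioi hderiv hanti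
    fun x ↦ x ^ (b - 1) * (1 - x) ^ (a - 1)
  rw [himage, integral_Ioo_rpow_mul_one_sub_rpow hb ha, ProbabilityTheory.beta, add_comm b,
    mul_comm] at hsubst
  rw [hsubst]
  refine setIntegral_congr_fun measurableSet_Ioi fun u (hu : 0 < u) ↦ ?_
  have h1u : 0 < 1 + u := by positivity
  have hsub : 1 - (1 + u)⁻¹ = u * (1 + u)⁻¹ := by field_simp; ring
  simp only [smul_eq_mul, hsub, Real.mul_rpow hu.le (inv_nonneg.2 h1u.le)]
  calc u ^ (a - 1) * (1 + u) ^ (-(a + b))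
      = u ^ (a - 1) * (1 + u)⁻¹ ^ (2 + (b - 1) + (a - 1)) := by
        rw [Real.inv_rpow h1u.le, ← Real.rpow_neg h1u.le]
        ring_nf
    _ = _ := by
        rw [Real.rpow_add (by positivity), Real.rpow_add (by positivity), Real.rpow_two,
          inv_pow]
        ring

lemma integrableOn_Ioi_rpow_mul_one_add_rpow (ha : 0 < a) (hb : 0 < b) :
    IntegrableOn (fun u : ℝ ↦ u ^ (a - 1) * (1 + u) ^ (-(a + b))) (Ioi 0) :=
  .of_integral_ne_zero <| by
    rw [integral_Ioi_rpow_mul_one_add_rpow ha hb]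
    exact (ProbabilityTheory.beta_pos ha hb).ne'

end Beta

lemma sin_mul_Gamma_mul_Gamma_two_sub {a : ℝ} (ha : Real.sin (a * Real.pi / 2) ≠ 0) :
    Real.sin (a * Real.pi / 2) * (Real.Gamma a * Real.Gamma (2 - a)) =
      Real.Gamma ((1 + a) / 2) * Real.Gamma ((3 - a) / 2) := by
  have hreflection : Real.Gamma (a / 2) * Real.Gamma (1 - a / 2) * Real.sin (a * Real.pi / 2) =
      Real.pi := by
    rw [Real.Gamma_mul_Gamma_one_sub, show Real.pi * (a / 2) = a * Real.pi / 2 by ring,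
      div_mul_cancel₀ _ ha]
  have hduplication : Real.Gamma (a / 2) * Real.Gamma ((1 + a) / 2) =
      Real.Gamma a * 2 ^ (1 - a) * √Real.pi := by
    convert Real.Gamma_mul_Gamma_add_half (a / 2) using 3 <;> ring_nf
  have hduplication' : Real.Gamma (1 - a / 2) * Real.Gamma ((3 - a) / 2) =
      Real.Gamma (2 - a) * 2 ^ (a - 1) * √Real.pi := by
    convert Real.Gamma_mul_Gamma_add_half (1 - a / 2) using 3 <;> ring_nf
  have hpow : (2 : ℝ) ^ (1 - a) * 2 ^ (a - 1) = 1 := by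
    rw [← Real.rpow_add two_pos, sub_add_sub_cancel, sub_self, Real.rpow_zero]
  have hsqrt := Real.mul_self_sqrt Real.pi_pos.le
  refine mul_left_cancel₀ Real.pi_pos.ne' ?_
  calc Real.pi * (Real.sin (a * Real.pi / 2) * (Real.Gamma a * Real.Gamma (2 - a)))
      = Real.sin (a * Real.pi / 2) * (Real.Gamma a * 2 ^ (1 - a) * √Real.pi) *
          (Real.Gamma (2 - a) * 2 ^ (a - 1) * √Real.pi) := by
        linear_combination (-Real.sin (a * Real.pi / 2) * Real.Gamma a * Real.Gamma (2 - a)) *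
          (hsqrt + √Real.pi ^ 2 * hpow)
    _ = Real.Gamma (a / 2) * Real.Gamma (1 - a / 2) * Real.sin (a * Real.pi / 2) *
          (Real.Gamma ((1 + a) / 2) * Real.Gamma ((3 - a) / 2)) := by
        rw [← hduplication, ← hduplication']
        ring
    _ = Real.pi * (Real.Gamma ((1 + a) / 2) * Real.Gamma ((3 - a) / 2)) := by rw [hreflection]

lemma abs_rpow_sub_rpow_le {r x y : ℝ} (hr : r ≤ 1) (hx : 0 < x) (hxy : x ≤ y) :
    |y ^ r - x ^ r| ≤ |r| * x ^ (r - 1) * (y - x) := by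
  have hbound : ∀ z ∈ Ici x, ‖r * z ^ (r - 1)‖ ≤ |r| * x ^ (r - 1) := fun z (hz : x ≤ z) ↦ by
    rw [Real.norm_eq_abs, abs_mul, abs_of_nonneg (Real.rpow_nonneg (hx.le.trans hz) _)]
    exact mul_le_mul_of_nonneg_left
      (Real.rpow_le_rpow_of_nonpos hx hz (by linarith)) (abs_nonneg r)
  simpa [abs_of_nonneg (sub_nonneg.2 hxy)] using
    (convex_Ici x).norm_image_sub_le_of_norm_hasDerivWithin_le
      (fun z (hz : x ≤ z) ↦ (Real.hasDerivAt_rpow_const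
        (Or.inl (hx.trans_le hz).ne')).hasDerivWithinAt) hbound self_mem_Ici hxy

lemma isBigO_one_add_rpow_atTop (p : ℝ) :
    (fun v : ℝ ↦ (1 + v) ^ p) =O[atTop] fun v ↦ v ^ p := by
  have hequiv : (fun v : ℝ ↦ 1 + v) ~[atTop] fun v ↦ v :=
    (isLittleO_const_id_atTop (1 : ℝ)).add_isEquivalent IsEquivalent.refl
  refine (hequiv.isTheta.rpow ?_ ?_).isBigO
  · filter_upwards [eventually_ge_atTop 0] with v hv using add_nonneg zero_le_one hv
  · exact eventually_ge_atTop 0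

lemma isBigO_one_add_rpow_sub_rpow_atTop {r : ℝ} (hr : r ≤ 1) :
    (fun v : ℝ ↦ (1 + v) ^ r - v ^ r) =O[atTop] fun v ↦ v ^ (r - 1) := by
  refine .of_bound |r| ?_
  filter_upwards [eventually_gt_atTop 0] with v hv
  rw [Real.norm_eq_abs, Real.norm_of_nonneg (Real.rpow_nonneg hv.le _)]
  simpa using abs_rpow_sub_rpow_le hr hv (le_add_of_nonneg_left zero_le_one)

lemma integral_mul_eq_half_integral_sq {Ω : Type*} [MeasurableSpace Ω] {μ : Measure Ω}
    {f g : Ω → ℝ} (hf : MemLp f 2 μ) (hg : MemLp g 2 μ) :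
    ∫ x, f x * g x ∂μ =
      1 / 2 * (∫ x, f x ^ 2 ∂μ + ∫ x, g x ^ 2 ∂μ - ∫ x, (f x - g x) ^ 2 ∂μ) := by
  have hdiff : Integrable (fun x ↦ (f x - g x) ^ 2) μ := (hf.sub hg).integrable_sq
  rw [← integral_add hf.integrable_sq hg.integrable_sq,
    ← integral_sub (hf.integrable_sq.fun_add hg.integrable_sq) hdiff, ← integral_const_mul]
  exact integral_congr_ae (.of_forall fun x ↦ by ring)

/-- The truncated power `y_+^r`, the kernel of the right-sided fractional operators. It vanishes on
`(-∞, 0]` for every `r`, so that `y_+^0` is the indicator of `(0, ∞)`. -/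
noncomputable def truncPow (r y : ℝ) : ℝ :=
  (Ioi 0).indicator (fun z ↦ z ^ r) y

section TruncPow

variable {r y : ℝ}

lemma truncPow_of_pos (hy : 0 < y) : truncPow r y = y ^ r :=
  indicator_of_mem (mem_Ioi.2 hy) _

lemma truncPow_of_nonpos (hy : y ≤ 0) : truncPow r y = 0 :=
  indicator_of_notMem (notMem_Ioi.2 hy) _

@[fun_prop]
lemma measurable_truncPow : Measurable (truncPow r) :=
  Measurable.indicator (by fun_prop) measurableSet_Ioi

lemma truncPow_sq : truncPow r y ^ 2 = truncPow (2 * r) y := by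
  rcases le_or_gt y 0 with hy | hy
  · simp [truncPow_of_nonpos hy]
  · rw [truncPow_of_pos hy, truncPow_of_pos hy, mul_comm, Real.rpow_mul hy.le, Real.rpow_two]

lemma truncPow_mul {c : ℝ} (hc : 0 < c) : truncPow r (c * y) = c ^ r * truncPow r y := by
  rcases le_or_gt y 0 with hy | hy
  · simp [truncPow_of_nonpos hy, truncPow_of_nonpos (mul_nonpos_of_nonneg_of_nonpos hc.le hy)]
  · rw [truncPow_of_pos hy, truncPow_of_pos (mul_pos hc hy), Real.mul_rpow hc.le hy.le]

lemma hasDerivAt_truncPow (hy : y ≠ 0) : HasDerivAt (truncPow r) (r * truncPow (r - 1) y) y := by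
  rcases lt_or_gt_of_ne hy with hneg | hpos
  · rw [truncPow_of_nonpos hneg.le, mul_zero]
    refine (hasDerivAt_const y 0).congr_of_eventuallyEq ?_
    filter_upwards [Iio_mem_nhds hneg] with z hz using truncPow_of_nonpos hz.le
  · rw [truncPow_of_pos hpos]
    refine (Real.hasDerivAt_rpow_const (Or.inl hy)).congr_of_eventuallyEq ?_
    filter_upwards [Ioi_mem_nhds hpos] with z hz using truncPow_of_pos hz

lemma continuous_truncPow (hr : 0 < r) : Continuous (truncPow r) := by
  have heq : truncPow r = fun z ↦ max z 0 ^ r := funext fun z ↦ by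
    rcases le_or_gt z 0 with hz | hz
    · rw [truncPow_of_nonpos hz, max_eq_right hz, Real.zero_rpow hr.ne']
    · rw [truncPow_of_pos hz, max_eq_left hz.le]
  rw [heq]
  exact (continuous_id.max continuous_const).rpow_const fun _ ↦ Or.inr hr.le

lemma integrableOn_Iic_truncPow (hr : -1 < r) (c : ℝ) : IntegrableOn (truncPow r) (Iic c) := by
  have hpow := (intervalIntegral.intervalIntegrable_rpow' (a := 0) (b := c) hr).1
  rwa [← Ioi_inter_Iic, ← integrableOn_indicator_iff measurableSet_Ioi] at hpow

lemma integral_truncPow (hr : -1 < r) (a b : ℝ) :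
    ∫ y in a..b, truncPow r y = (truncPow (r + 1) b - truncPow (r + 1) a) / (r + 1) := by
  have hr1 : r + 1 ≠ 0 := by linarith
  have hderiv : ∀ y ∈ Ioo (min a b) (max a b) \ {0},
      HasDerivAt (fun y ↦ truncPow (r + 1) y / (r + 1)) (truncPow r y) y := fun y hy ↦ by
    simpa [hr1] using (hasDerivAt_truncPow (r := r + 1) hy.2).div_const (r + 1)
  have hint : IntervalIntegrable (truncPow r) volume a b :=
    ⟨(integrableOn_Iic_truncPow hr b).mono_set Ioc_subset_Iic_self,
      (integrableOn_Iic_truncPow hr a).mono_set Ioc_subset_Iic_self⟩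
  rw [integral_eq_of_hasDerivAt_off_countable _ _ (countable_singleton 0)
    ((continuous_truncPow (by linarith)).div_const _).continuousOn hderiv hint, sub_div]

lemma memLp_truncPow_add_sub_truncPow_Iic (hr : -1 / 2 < r) (h c : ℝ) :
    MemLp (fun y ↦ truncPow r (h + y) - truncPow r y) 2 (volume.restrict (Iic c)) := by
  have hnear (d : ℝ) : MemLp (truncPow r) 2 (volume.restrict (Iic d)) := by
    simp only [memLp_two_iff_integrable_sq measurable_truncPow.aestronglyMeasurable, truncPow_sq]
    exact integrableOn_Iic_truncPow (by linarith) d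
  refine ((hnear (c + h)).comp_measurePreserving ?_).sub (hnear c)
  convert (measurePreserving_add_left volume h).restrict_preimage measurableSet_Iic using 2
  simp

lemma memLp_truncPow_add_sub_truncPow_Ioi (hr : r < 1 / 2) {h c : ℝ} (hh : 0 ≤ h) (hc : 0 < c) :
    MemLp (fun y ↦ truncPow r (h + y) - truncPow r y) 2 (volume.restrict (Ioi c)) := by
  have htail : MemLp (fun y : ℝ ↦ y ^ (r - 1)) 2 (volume.restrict (Ioi c)) := by
    rw [memLp_two_iff_integrable_sq (by fun_prop)]
    refine (integrableOn_Ioi_rpow_of_lt (a := (r - 1) * 2) (by linarith) hc).congr_fun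
      (fun y hy ↦ ?_) measurableSet_Ioi
    simp only [Real.rpow_mul (hc.trans hy).le, Real.rpow_two]
  refine htail.of_le_mul (c := |r| * h) (by fun_prop)
    (ae_restrict_of_forall_mem measurableSet_Ioi fun y (hy : c < y) ↦ ?_)
  have hy₀ := hc.trans hy
  rw [truncPow_of_pos hy₀, truncPow_of_pos (by linarith), Real.norm_eq_abs, Real.norm_eq_abs,
    abs_of_nonneg (Real.rpow_nonneg hy₀.le _)]
  calc |(h + y) ^ r - y ^ r| ≤ |r| * y ^ (r - 1) * (h + y - y) :=
        abs_rpow_sub_rpow_le (by linarith) hy₀ (by linarith)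
    _ = |r| * h * y ^ (r - 1) := by ring

lemma memLp_truncPow_add_sub_truncPow (hr : -1 / 2 < r) (hr' : r < 1 / 2) {h : ℝ} (hh : 0 ≤ h) :
    MemLp (fun y ↦ truncPow r (h + y) - truncPow r y) 2 := by
  have hIic := memLp_truncPow_add_sub_truncPow_Iic hr h 1
  have hIoi := memLp_truncPow_add_sub_truncPow_Ioi hr' hh one_pos
  rw [memLp_two_iff_integrable_sq (by fun_prop)] at hIic hIoi ⊢
  rw [← integrableOn_univ, ← Iic_union_Ioi (a := (1 : ℝ))]
  exact IntegrableOn.union hIic hIoi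

lemma memLp_truncPow_sub_sub_truncPow_sub (hr : -1 / 2 < r) (hr' : r < 1 / 2) (a b : ℝ) :
    MemLp (fun x ↦ truncPow r (a - x) - truncPow r (b - x)) 2 := by
  wlog hba : b ≤ a generalizing a b
  · exact (this b a (le_of_not_ge hba)).neg.congr_norm (by fun_prop) (.of_forall fun x ↦ by simp)
  · convert (memLp_truncPow_add_sub_truncPow hr hr' (sub_nonneg.2 hba)).comp_measurePreserving
      (Measure.measurePreserving_sub_left volume b) using 4 with x
    rw [Function.comp_apply, sub_add_sub_cancel]

lemma integral_sq_truncPow_add_sub_truncPow_eq_rpow_mul {h : ℝ} (hr : -1 / 2 < r) (hh : 0 ≤ h) :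
    ∫ y, (truncPow r (h + y) - truncPow r y) ^ 2 =
      h ^ (2 * r + 1) * ∫ y, (truncPow r (1 + y) - truncPow r y) ^ 2 := by
  rcases hh.eq_or_lt with rfl | hh
  · simp [Real.zero_rpow (show 2 * r + 1 ≠ 0 by linarith)]
  · have hscale (y : ℝ) : (truncPow r (h + h * y) - truncPow r (h * y)) ^ 2 =
        h ^ (2 * r) * (truncPow r (1 + y) - truncPow r y) ^ 2 := by
      rw [← mul_one_add, truncPow_mul hh, truncPow_mul hh, mul_comm 2, Real.rpow_mul hh.le,
        Real.rpow_two]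
      ring
    have hsubst := Measure.integral_comp_mul_left
      (fun y ↦ (truncPow r (h + y) - truncPow r y) ^ 2) h
    simp only [hscale, integral_const_mul, abs_of_pos (inv_pos.2 hh), smul_eq_mul] at hsubst
    rw [Real.rpow_add_one hh.ne', mul_right_comm, hsubst]
    field_simp

lemma integral_sq_truncPow_sub_sub_truncPow_sub (hr : -1 / 2 < r) (a b : ℝ) :
    ∫ x, (truncPow r (a - x) - truncPow r (b - x)) ^ 2 =
      |a - b| ^ (2 * r + 1) * ∫ y, (truncPow r (1 + y) - truncPow r y) ^ 2 := by
  wlog hba : b ≤ a generalizing a b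
  · rw [abs_sub_comm, ← this b a (le_of_not_ge hba)]
    exact integral_congr_ae (.of_forall fun x ↦ sub_sq_comm _ _)
  · rw [abs_of_nonneg (sub_nonneg.2 hba), ← integral_sq_truncPow_add_sub_truncPow_eq_rpow_mul hr
      (sub_nonneg.2 hba), ← integral_sub_left_eq_self _ volume b]
    simp only [sub_sub_cancel, ← sub_add]

lemma integral_mul_truncPow_sub_sub_truncPow_sub (hr : -1 / 2 < r) (hr' : r < 1 / 2) (a b c : ℝ) :
    ∫ x, (truncPow r (a - x) - truncPow r (c - x)) * (truncPow r (b - x) - truncPow r (c - x)) =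
      1 / 2 * (|a - c| ^ (2 * r + 1) + |b - c| ^ (2 * r + 1) - |a - b| ^ (2 * r + 1)) *
        ∫ y, (truncPow r (1 + y) - truncPow r y) ^ 2 := by
  rw [integral_mul_eq_half_integral_sq (memLp_truncPow_sub_sub_truncPow_sub hr hr' a c)
    (memLp_truncPow_sub_sub_truncPow_sub hr hr' b c)]
  simp only [sub_sub_sub_cancel_right, integral_sq_truncPow_sub_sub_truncPow_sub hr]
  ring

end TruncPow

/-- A primitive of `(2 * r + 1) * ((1 + u) ^ r - u ^ r) ^ 2 - (1 - r) * u ^ r * (1 + u) ^ (r - 2)`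
on `(0, ∞)`. Its derivative trades the square of the increment for a beta integrand, without
separating terms that are not integrable on their own. -/
noncomputable def incrementPrimitive (r u : ℝ) : ℝ :=
  (1 + u) ^ (2 * r + 1) + u ^ (2 * r + 1) - 2 * (u ^ (r + 1) * (1 + u) ^ r) -
    u ^ (r + 1) * (1 + u) ^ (r - 1)

section IncrementPrimitive

variable {r u : ℝ}

lemma hasDerivAt_incrementPrimitive (hu : 0 < u) :
    HasDerivAt (incrementPrimitive r)
      ((2 * r + 1) * ((1 + u) ^ r - u ^ r) ^ 2 - (1 - r) * (u ^ r * (1 + u) ^ (r - 2))) u := by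
  have h1u : 0 < 1 + u := by positivity
  have hpow (p : ℝ) : HasDerivAt (fun v ↦ v ^ p) (p * u ^ (p - 1)) u :=
    Real.hasDerivAt_rpow_const (Or.inl hu.ne')
  have hpow_add (p : ℝ) : HasDerivAt (fun v ↦ (1 + v) ^ p) (p * (1 + u) ^ (p - 1)) u :=
    (Real.hasDerivAt_rpow_const (Or.inl h1u.ne')).comp_const_add 1 u
  refine ((((hpow_add (2 * r + 1)).add (hpow (2 * r + 1))).sub
    (((hpow (r + 1)).mul (hpow_add r)).const_mul 2)).sub
    ((hpow (r + 1)).mul (hpow_add (r - 1)))).congr_deriv ?_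
  have hsq {v : ℝ} (hv : 0 < v) : v ^ (2 * r) = (v ^ r) ^ 2 := by
    rw [mul_comm, Real.rpow_mul hv.le, Real.rpow_two]
  have hsub_one : (1 + u) ^ (r - 1) = (1 + u) ^ (r - 2) * (1 + u) := by
    rw [← Real.rpow_add_one h1u.ne']
    ring_nf
  have hself : (1 + u) ^ r = (1 + u) ^ (r - 2) * (1 + u) ^ 2 := by
    rw [← Real.rpow_two, ← Real.rpow_add h1u, sub_add_cancel]
  simp only [add_sub_cancel_right, hsq hu, hsq h1u, Real.rpow_add_one hu.ne',
    show r - 1 - 1 = r - 2 by ring, hsub_one, hself]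
  ring

-- In this form every term is `O(u ^ (2 * r - 1))` at infinity.
lemma incrementPrimitive_eq (hu : 0 < u) :
    incrementPrimitive r u =
      u * ((1 + u) ^ r - u ^ r) ^ 2 + (1 + u) ^ r * ((1 + u) ^ r - u ^ r) +
        u ^ r * (1 + u) ^ (r - 1) := by
  have h1u : 0 < 1 + u := by positivity
  have hpow {v : ℝ} (hv : 0 < v) : v ^ (2 * r + 1) = (v ^ r) ^ 2 * v := by
    rw [Real.rpow_add_one hv.ne', mul_comm 2, Real.rpow_mul hv.le, Real.rpow_two]
  have hself : (1 + u) ^ r = (1 + u) ^ (r - 1) * (1 + u) := by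
    rw [← Real.rpow_add_one h1u.ne', sub_add_cancel]
  rw [incrementPrimitive, hpow hu, hpow h1u, Real.rpow_add_one hu.ne', hself]
  ring

lemma continuousAt_incrementPrimitive_zero (hr : -1 / 2 < r) :
    ContinuousAt (incrementPrimitive r) 0 := by
  have hpow {p : ℝ} (hp : 0 ≤ p) : ContinuousAt (fun v : ℝ ↦ v ^ p) 0 :=
    Real.continuousAt_rpow_const _ _ (Or.inr hp)
  have hpow_add (p : ℝ) : ContinuousAt (fun v : ℝ ↦ (1 + v) ^ p) 0 :=
    (continuousAt_const.add continuousAt_id).rpow_const (Or.inl (by simp))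
  exact (((hpow_add _).add (hpow (by linarith))).sub
    (((hpow (by linarith)).mul (hpow_add r)).const_mul 2)).sub
    ((hpow (by linarith)).mul (hpow_add _))

lemma incrementPrimitive_zero (hr : -1 / 2 < r) : incrementPrimitive r 0 = 1 := by
  simp [incrementPrimitive, Real.zero_rpow (show 2 * r + 1 ≠ 0 by linarith),
    Real.zero_rpow (show r + 1 ≠ 0 by linarith)]

lemma tendsto_incrementPrimitive_atTop (hr : r < 1 / 2) :
    Tendsto (incrementPrimitive r) atTop (𝓝 0) := by
  have hincr := isBigO_one_add_rpow_sub_rpow_atTop (r := r) (by linarith)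
  have hid : (fun v : ℝ ↦ v) =O[atTop] fun v ↦ v ^ (1 : ℝ) := by
    simpa only [Real.rpow_one] using isBigO_refl _ _
  have hsq := hid.mul_atTop_rpow_of_isBigO_rpow 1 (2 * r - 2) (2 * r - 1)
    (hincr.mul_atTop_rpow_of_isBigO_rpow _ _ _ hincr (by linarith)) (by linarith)
  have hcross := (isBigO_one_add_rpow_atTop r).mul_atTop_rpow_of_isBigO_rpow _ _ (2 * r - 1)
    hincr (by linarith)
  have hlast := (isBigO_refl (fun v : ℝ ↦ v ^ r) atTop).mul_atTop_rpow_of_isBigO_rpow _ _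
    (2 * r - 1) (isBigO_one_add_rpow_atTop (r - 1)) (by linarith)
  have hdecay : Tendsto (fun v : ℝ ↦ v ^ (2 * r - 1)) atTop (𝓝 0) := by
    simpa using tendsto_rpow_neg_atTop (y := 1 - 2 * r) (by linarith)
  refine (((hsq.add hcross).add hlast).trans_tendsto hdecay).congr' ?_
  filter_upwards [eventually_gt_atTop 0] with v hv
  rw [incrementPrimitive_eq hv, sq]
  rfl

lemma integral_Ioi_sq_one_add_rpow_sub_rpow (hr : -1 / 2 < r) (hr' : r < 1 / 2) :
    (2 * r + 1) * ∫ u in Ioi (0 : ℝ), ((1 + u) ^ r - u ^ r) ^ 2 =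
      Real.Gamma (r + 1) * Real.Gamma (1 - 2 * r) / Real.Gamma (1 - r) - 1 := by
  have hincr : IntegrableOn (fun u : ℝ ↦ ((1 + u) ^ r - u ^ r) ^ 2) (Ioi 0) := by
    refine (memLp_truncPow_add_sub_truncPow hr hr' zero_le_one).integrable_sq.integrableOn.congr_fun
      (fun u (hu : 0 < u) ↦ ?_) measurableSet_Ioi
    simp only [truncPow_of_pos hu, truncPow_of_pos (add_pos one_pos hu)]
  have h1r : 1 - r ≠ 0 := by linarith
  have hexp : -(r + 1 + (1 - 2 * r)) = r - 2 := by ring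
  have hbeta : IntegrableOn (fun u : ℝ ↦ u ^ r * (1 + u) ^ (r - 2)) (Ioi 0) := by
    simpa only [add_sub_cancel_right, hexp] using
      integrableOn_Ioi_rpow_mul_one_add_rpow (a := r + 1) (b := 1 - 2 * r) (by linarith)
        (by linarith)
  have hbeta_eq : (1 - r) * ∫ u in Ioi (0 : ℝ), u ^ r * (1 + u) ^ (r - 2) =
      Real.Gamma (r + 1) * Real.Gamma (1 - 2 * r) / Real.Gamma (1 - r) := by
    have h := integral_Ioi_rpow_mul_one_add_rpow (a := r + 1) (b := 1 - 2 * r) (by linarith)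
      (by linarith)
    rw [show r + 1 + (1 - 2 * r) = 1 - r + 1 by ring, Real.Gamma_add_one h1r] at h
    rw [← mul_div_mul_left _ _ h1r, mul_div_assoc, ← h]
    simp only [add_sub_cancel_right, show -(1 - r + 1) = r - 2 by ring]
  have hFTC := integral_Ioi_of_hasDerivAt_of_tendsto
    (continuousAt_incrementPrimitive_zero hr).continuousWithinAt
    (fun u hu ↦ hasDerivAt_incrementPrimitive hu)
    ((hincr.const_mul (2 * r + 1)).sub (hbeta.const_mul (1 - r)))
    (tendsto_incrementPrimitive_atTop hr')
  rw [integral_sub (hincr.const_mul _) (hbeta.const_mul _), integral_const_mul, integral_const_mul,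
    hbeta_eq, incrementPrimitive_zero hr] at hFTC
  linarith

end IncrementPrimitive

lemma integral_sq_truncPow_one_add_sub_truncPow {r : ℝ} (hr : -1 / 2 < r) (hr' : r < 1 / 2) :
    ∫ y, (truncPow r (1 + y) - truncPow r y) ^ 2 =
      Real.Gamma (r + 1) * Real.Gamma (1 - 2 * r) / ((2 * r + 1) * Real.Gamma (1 - r)) := by
  have hneg : ∫ y in Iic 0, (truncPow r (1 + y) - truncPow r y) ^ 2 = 1 / (2 * r + 1) := by
    calc ∫ y in Iic 0, (truncPow r (1 + y) - truncPow r y) ^ 2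
        = ∫ y in Ioc (-1) 0, truncPow (2 * r) (1 + y) := by
          rw [setIntegral_congr_fun (g := fun y ↦ truncPow (2 * r) (1 + y)) measurableSet_Iic
            fun y hy ↦ by simp only [truncPow_of_nonpos hy, sub_zero, truncPow_sq]]
          refine setIntegral_eq_of_subset_of_forall_sdiff_eq_zero measurableSet_Iic
            Ioc_subset_Iic_self fun y ⟨(hy : y ≤ 0), hy'⟩ ↦ truncPow_of_nonpos ?_
          by_contra! h
          exact hy' ⟨by linarith, hy⟩
      _ = 1 / (2 * r + 1) := by
          rw [← intervalIntegral.integral_of_le (by norm_num),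
            intervalIntegral.integral_comp_add_left (truncPow (2 * r)),
            integral_truncPow (by linarith)]
          simp [truncPow_of_pos, truncPow_of_nonpos]
  have hpos : ∫ y in Ioi 0, (truncPow r (1 + y) - truncPow r y) ^ 2 =
      ∫ y in Ioi (0 : ℝ), ((1 + y) ^ r - y ^ r) ^ 2 :=
    setIntegral_congr_fun measurableSet_Ioi fun y (hy : 0 < y) ↦ by
      simp only [truncPow_of_pos hy, truncPow_of_pos (add_pos one_pos hy)]
  have hint := (memLp_truncPow_add_sub_truncPow hr hr' zero_le_one).integrable_sq
  rw [← intervalIntegral.integral_Iic_add_Ioi hint.integrableOn hint.integrableOn, hneg, hpos]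
  have h2r : 2 * r + 1 ≠ 0 := by linarith
  refine mul_left_cancel₀ h2r ?_
  rw [mul_add, integral_Ioi_sq_one_add_rpow_sub_rpow hr hr']
  field_simp
  ring

lemma sq_Kconst_div_Gamma_mul_integral_sq_truncPow {α : ℝ} (hα₀ : 0 < α) (hα₂ : α < 2) :
    (Kconst α / Real.Gamma ((1 + α) / 2)) ^ 2 *
      ∫ y, (truncPow ((α - 1) / 2) (1 + y) - truncPow ((α - 1) / 2) y) ^ 2 = 1 := by
  have hsin : 0 < Real.sin (α * Real.pi / 2) :=
    Real.sin_pos_of_pos_of_lt_pi (by positivity) (by nlinarith [Real.pi_pos])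
  have hΓ₁ : Real.Gamma ((1 + α) / 2) ≠ 0 := (Real.Gamma_pos_of_pos (by linarith)).ne'
  have hΓ₃ : Real.Gamma ((3 - α) / 2) ≠ 0 := (Real.Gamma_pos_of_pos (by linarith)).ne'
  rw [Kconst, div_pow, Real.sq_sqrt (by positivity),
    integral_sq_truncPow_one_add_sub_truncPow (by linarith) (by linarith),
    show (α - 1) / 2 + 1 = (1 + α) / 2 by ring, show 1 - 2 * ((α - 1) / 2) = 2 - α by ring,
    show 2 * ((α - 1) / 2) + 1 = α by ring, show 1 - (α - 1) / 2 = (3 - α) / 2 by ring]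
  field_simp
  linear_combination sin_mul_Gamma_mul_Gamma_two_sub hsin.ne'

section FractionalOperators

variable {r a b : ℝ}

lemma setIntegral_Ioi_indicator_Ico_mul_rpow (hr : -1 < r) (hab : a ≤ b) (x : ℝ) :
    ∫ u in Ioi x, (Ico a b).indicator 1 u * (u - x) ^ r =
      (truncPow (r + 1) (b - x) - truncPow (r + 1) (a - x)) / (r + 1) := by
  have hswap (u : ℝ) : (Ioi x).indicator (fun u ↦ (Ico a b).indicator 1 u * (u - x) ^ r) u =
      (Ico a b).indicator (fun u ↦ truncPow r (u - x)) u := by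
    simp only [indicator_apply, truncPow, mem_Ioi, sub_pos, Pi.one_apply]
    split_ifs <;> simp
  rw [← integral_indicator measurableSet_Ioi]
  simp only [hswap]
  rw [integral_indicator measurableSet_Ico, integral_Ico_eq_integral_Ioc,
    ← intervalIntegral.integral_of_le hab, intervalIntegral.integral_comp_sub_right,
    integral_truncPow hr]

lemma fracIntMinus_indicator_Ico (hr : 0 < r) (hab : a ≤ b) (x : ℝ) :
    fracIntMinus r ((Ico a b).indicator 1) x =
      (truncPow r (b - x) - truncPow r (a - x)) / Real.Gamma (r + 1) := by
  rw [fracIntMinus, setIntegral_Ioi_indicator_Ico_mul_rpow (by linarith) hab, sub_add_cancel,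
    Real.Gamma_add_one hr.ne', div_mul_div_comm, one_mul, mul_comm r]

lemma fracDerivMinus_indicator_Ico (hr : r < 1) (hab : a ≤ b) {x : ℝ} (hxa : x ≠ a)
    (hxb : x ≠ b) :
    fracDerivMinus r ((Ico a b).indicator 1) x =
      (truncPow (-r) (b - x) - truncPow (-r) (a - x)) / Real.Gamma (1 - r) := by
  have hderiv {c : ℝ} (hxc : x ≠ c) :
      HasDerivAt (fun y ↦ truncPow (-r + 1) (c - y)) (-((-r + 1) * truncPow (-r) (c - x))) x := by
    have h := hasDerivAt_truncPow (r := -r + 1) (sub_ne_zero.2 hxc.symm)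
    rw [add_sub_cancel_right] at h
    exact h.comp_const_sub c x
  have hr₁ : -r + 1 ≠ 0 := by linarith
  simp only [fracDerivMinus, setIntegral_Ioi_indicator_Ico_mul_rpow (neg_lt_neg hr) hab]
  rw [(((hderiv hxb).fun_sub (hderiv hxa)).div_const (-r + 1)).deriv]
  field_simp
  ring

end FractionalOperators

lemma indicator_Ico_eq_truncPow_zero_sub {a b : ℝ} (hab : a ≤ b) (x : ℝ) :
    (Ico a b).indicator 1 x = truncPow 0 (b - x) - truncPow 0 (a - x) := by
  simp only [truncPow, indicator_apply, mem_Ico, mem_Ioi, sub_pos, Real.rpow_zero, Pi.one_apply]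
  split_ifs <;> grind

lemma Kconst_one : Kconst 1 = 1 := by
  simp [Kconst]

lemma Mminus_indicator_Ico_ae_eq {α a b : ℝ} (hα : 0 < α) (hab : a ≤ b) :
    ∀ᵐ x, Mminus α ((Ico a b).indicator 1) x =
      Kconst α / Real.Gamma ((1 + α) / 2) *
        (truncPow ((α - 1) / 2) (b - x) - truncPow ((α - 1) / 2) (a - x)) := by
  filter_upwards [Measure.ae_ne volume a, Measure.ae_ne volume b] with x hxa hxb
  rcases lt_trichotomy α 1 with hlt | rfl | hgt
  · simp only [Mminus, if_pos hlt]
    rw [fracDerivMinus_indicator_Ico (by linarith) hab hxa hxb, neg_div, neg_neg,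
      show 1 - -((α - 1) / 2) = (1 + α) / 2 by ring]
    ring
  · simp only [Mminus]
    norm_num [Kconst_one, indicator_Ico_eq_truncPow_zero_sub hab]
  · simp only [Mminus, if_neg hgt.not_gt, if_neg hgt.ne']
    rw [fracIntMinus_indicator_Ico (by linarith) hab, show (α - 1) / 2 + 1 = (1 + α) / 2 by ring]
    ring

/-- For all `t, s ≥ 0` and `0 < α < 2`, the `L²(ℝ)` inner product of
`M_-^{α/2} 1_{[0,t)}` and `M_-^{α/2} 1_{[0,s)}` equals `½(t^α + s^α - |t-s|^α)`. -/
theorem Mminus_indicator_inner (α : ℝ) (hα₀ : 0 < α) (hα₂ : α < 2)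
    (t s : ℝ) (ht : 0 ≤ t) (hs : 0 ≤ s) :
    ∫ x : ℝ, Mminus α (Set.indicator (Set.Ico 0 t) 1) x *
        Mminus α (Set.indicator (Set.Ico 0 s) 1) x =
      (1 / 2) * (t ^ α + s ^ α - |t - s| ^ α) := by
  set r : ℝ := (α - 1) / 2 with hr
  have hae : ∀ᵐ x, Mminus α ((Ico 0 t).indicator 1) x * Mminus α ((Ico 0 s).indicator 1) x =
      (Kconst α / Real.Gamma ((1 + α) / 2)) ^ 2 * ((truncPow r (t - x) - truncPow r (0 - x)) *
        (truncPow r (s - x) - truncPow r (0 - x))) := by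
    filter_upwards [Mminus_indicator_Ico_ae_eq hα₀ ht, Mminus_indicator_Ico_ae_eq hα₀ hs]
      with x hxt hxs
    rw [hxt, hxs]
    ring
  have hα : 2 * r + 1 = α := by rw [hr]; ring
  rw [integral_congr_ae hae, integral_const_mul,
    integral_mul_truncPow_sub_sub_truncPow_sub (by linarith) (by linarith), hα, sub_zero, sub_zero,
    abs_of_nonneg ht, abs_of_nonneg hs, mul_left_comm,
    sq_Kconst_div_Gamma_mul_integral_sq_truncPow hα₀ hα₂, mul_one]
end

section
/- Let μ_β be a probability measure on the dual space S'_d with characteristic functional ∫ e^{i⟨w,φ⟩} dμ_β(w) = E_β(−½|φ|₀²) for φ ∈ S_d, where 0 < β ≤ 1. Then for every φ ∈ S_d and n ∈ ℕ₀, the odd moments vanish: ∫ ⟨w,φ⟩^{2n+1} dμ_β(w) = 0, and the even moments satisfy ∫ ⟨w,φ⟩^{2n} dμ_β(w) = (2n)! / (2^n Γ(βn+1)) · |φ|₀^{2n}. -/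
open MeasureTheory

/-- The Mittag-Leffler function `E_β(z) = ∑ zⁿ/Γ(βn+1)` (complex version). -/
noncomputable def mittagLeffler (β : ℝ) (z : ℂ) : ℂ :=
  ∑' n : ℕ, z ^ n / Complex.Gamma ((β * n + 1 : ℝ) : ℂ)

/-!
The symmetric difference of order `2n` and step `h` of a characteristic function at `0` is
`(-1)ⁿ ∫ (2 sin(hx/2))²ⁿ dν(x)`. Divided by `h²ⁿ`, the integrand is nonnegative, bounded by `x²ⁿ`
and converges to `x²ⁿ` as `h → 0`, while a Peano expansion of order `2n` of the characteristic
function makes the quotient converge to `(2n)!` times the coefficient of `t²ⁿ`. Fatou's lemma and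
dominated convergence then give the existence and the value of the `2n`-th moment, and for
`E_β(-½σ²t²)` the coefficient is read off the power series of `E_β`. Odd moments vanish because an
even characteristic function belongs to a symmetric law. Measurability of `X` is recovered from
that of `exp(itX)`, since `X` is the limit of `sin(tX)/t` as `t → 0`.
-/

open Filter Topology Asymptotics Polynomial
open scoped fwdDiff Nat RealInnerProductSpace

section ForwardDifference

theorem fwdDiff_iter_mul_eq_fwdDiff_one_iter {R G : Type*} [Ring R] [AddCommGroup G] (f : R → G)
    (h a : R) (n : ℕ) : Δ_[h] ^[n] f (h * a) = Δ_[1] ^[n] (fun s ↦ f (h * s)) a := by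
  simp only [fwdDiff_iter_eq_sum_shift, mul_add, mul_smul_comm, mul_one]

theorem fwdDiff_one_iter_eval_of_natDegree_le {R : Type*} [CommRing R] {P : R[X]} {n : ℕ}
    (hP : P.natDegree ≤ n) (a : R) : Δ_[1] ^[n] P.eval a = n ! * P.coeff n := by
  rcases hP.lt_or_eq with hlt | rfl
  · rw [fwdDiff_iter_eq_zero_of_degree_lt hlt, coeff_eq_zero_of_natDegree_lt hlt]
    simp
  · rw [fwdDiff_iter_degree_eq_factorial]
    simp [mul_comm]

theorem natDegree_comp_C_mul_X_le {R : Type*} [Semiring R] (P : R[X]) (r : R) :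
    (P.comp (C r * X)).natDegree ≤ P.natDegree :=
  calc (P.comp (C r * X)).natDegree ≤ P.natDegree * (C r * X).natDegree := natDegree_comp_le
    _ ≤ P.natDegree * 1 := by gcongr; simpa using natDegree_C_mul_X_pow_le r 1
    _ = P.natDegree := mul_one _

theorem fwdDiff_iter_eval_of_natDegree_le {R : Type*} [CommRing R] {P : R[X]} {n : ℕ}
    (hP : P.natDegree ≤ n) (h a : R) :
    Δ_[h] ^[n] P.eval (h * a) = h ^ n * (n ! * P.coeff n) := by
  have hcomp : (fun s ↦ P.eval (h * s)) = (P.comp (C h * X)).eval := by ext; simp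
  rw [fwdDiff_iter_mul_eq_fwdDiff_one_iter, hcomp, fwdDiff_one_iter_eval_of_natDegree_le
    ((natDegree_comp_C_mul_X_le P h).trans hP), comp_C_mul_X_coeff]
  ring

theorem isLittleO_fwdDiff_iter_mul {𝕜 E : Type*} [NormedField 𝕜] [NormedAddCommGroup E]
    {f : 𝕜 → E} {m : ℕ} (hf : f =o[𝓝 0] fun t ↦ t ^ m) (a : 𝕜) (n : ℕ) :
    (fun h ↦ Δ_[h] ^[n] f (h * a)) =o[𝓝 0] fun h ↦ h ^ m := by
  have hshift (b : 𝕜) : (fun h ↦ f (h * b)) =o[𝓝 0] fun h ↦ h ^ m := by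
    have hmul : Tendsto (fun h : 𝕜 ↦ h * b) (𝓝 0) (𝓝 0) := by
      simpa using (continuous_mul_const b).tendsto 0
    refine (hf.comp_tendsto hmul).trans_isBigO ?_
    simpa only [Function.comp_def, mul_pow, mul_comm _ (b ^ m)] using
      (isBigO_refl (fun h : 𝕜 ↦ h ^ m) (𝓝 0)).const_mul_left (b ^ m)
  simp_rw [fwdDiff_iter_mul_eq_fwdDiff_one_iter _ _ a]
  simp only [fwdDiff_iter_eq_sum_shift]
  exact IsLittleO.fun_sum fun k _ ↦
    (IsBigO.of_bound _ (.of_forall fun h ↦ norm_zsmul_le _ _)).trans_isLittleO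
      (hshift (a + k • 1))

theorem isLittleO_fwdDiff_iter_sub {𝕜 A : Type*} [NormedField 𝕜] [NormedCommRing A]
    [NormedAlgebra 𝕜 A] {f : 𝕜 → A} {n : ℕ} {P : A[X]} (hP : P.natDegree ≤ n)
    (hf : (fun t ↦ f t - P.eval (algebraMap 𝕜 A t)) =o[𝓝 0] fun t ↦ t ^ n) (a : 𝕜) :
    (fun h ↦ Δ_[h] ^[n] f (h * a) - algebraMap 𝕜 A h ^ n * (n ! * P.coeff n)) =o[𝓝 0]
      fun h ↦ h ^ n := by
  refine (isLittleO_fwdDiff_iter_mul hf a n).congr_left fun h ↦ ?_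
  rw [← fwdDiff_iter_eval_of_natDegree_le hP _ (algebraMap 𝕜 A a)]
  simp [fwdDiff_iter_eq_sum_shift, smul_sub]

end ForwardDifference

section Integration

theorem integrable_and_integral_eq_of_tendsto {α ι : Type*} [MeasurableSpace α] {μ : Measure α}
    {l : Filter ι} [l.NeBot] [l.IsCountablyGenerated] {F : ι → α → ℝ} {f : α → ℝ} {L : ℝ}
    (hFint : ∀ i, Integrable (F i) μ) (hF0 : ∀ i x, 0 ≤ F i x) (hFf : ∀ i x, F i x ≤ f x)
    (hlim : ∀ x, Tendsto (F · x) l (𝓝 (f x)))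
    (hL : Tendsto (fun i ↦ ∫ x, F i x ∂μ) l (𝓝 L)) :
    Integrable f μ ∧ ∫ x, f x ∂μ = L := by
  have hfatou : ∫⁻ x, ‖f x‖ₑ ∂μ ≤ liminf (fun i ↦ ∫⁻ x, ‖F i x‖ₑ ∂μ) l := by
    rw [lintegral_congr fun x ↦ (hlim x).enorm.liminf_eq.symm]
    exact lintegral_liminf_le' fun i ↦ (hFint i).aemeasurable.enorm
  have hnorm : (fun i ↦ ∫⁻ x, ‖F i x‖ₑ ∂μ) = fun i ↦ ENNReal.ofReal (∫ x, F i x ∂μ) := by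
    ext i
    rw [ofReal_integral_eq_lintegral_ofReal (hFint i) (.of_forall (hF0 i))]
    simp only [Real.enorm_of_nonneg (hF0 i _)]
  have hint : Integrable f μ := by
    refine ⟨aestronglyMeasurable_of_tendsto_ae l (fun i ↦ (hFint i).1) (.of_forall hlim), ?_⟩
    rw [hnorm, (ENNReal.tendsto_ofReal hL).liminf_eq] at hfatou
    exact hfatou.trans_lt ENNReal.ofReal_lt_top
  refine ⟨hint, tendsto_nhds_unique ?_ hL⟩
  refine tendsto_integral_filter_of_dominated_convergence f (.of_forall fun i ↦ (hFint i).1)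
    (.of_forall fun i ↦ .of_forall fun x ↦ ?_) hint (.of_forall hlim)
  rw [Real.norm_of_nonneg (hF0 i x)]
  exact hFf i x

theorem integral_eq_zero_of_odd {G E : Type*} [MeasurableSpace G] [AddGroup G] [MeasurableNeg G]
    [NormedAddCommGroup E] [NormedSpace ℝ E] {μ : Measure G} [μ.IsNegInvariant] {f : G → E}
    (hf : f.Odd) : ∫ x, f x ∂μ = 0 := by
  have hneg : ∫ x, f x ∂μ = -∫ x, f x ∂μ := by
    rw [← integral_neg, ← integral_neg_eq_self]
    exact integral_congr_ae (.of_forall hf)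
  rw [eq_neg_iff_add_eq_zero, ← two_smul ℝ] at hneg
  exact (smul_eq_zero.mp hneg).resolve_left two_ne_zero

theorem tendsto_sin_mul_div (x : ℝ) :
    Tendsto (fun t ↦ Real.sin (t * x) / t) (𝓝[≠] 0) (𝓝 x) := by
  have hderiv : HasDerivAt (fun t ↦ Real.sin (t * x)) x 0 := by
    simpa using ((hasDerivAt_id (0 : ℝ)).mul_const x).sin
  simpa [div_eq_inv_mul] using hderiv.tendsto_slope_zero

theorem abs_two_mul_sin_div_le (h x : ℝ) : |2 * Real.sin (h * x / 2) / h| ≤ |x| := by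
  rw [abs_div, abs_mul, abs_two]
  refine div_le_of_le_mul₀ (abs_nonneg h) (abs_nonneg x) ?_
  calc 2 * |Real.sin (h * x / 2)| ≤ 2 * |h * x / 2| := by grw [Real.abs_sin_le_abs]
    _ = |x| * |h| := by rw [abs_div, abs_mul, abs_two]; ring

theorem aemeasurable_of_frequently_aemeasurable_cexp {Ω : Type*} [MeasurableSpace Ω]
    {μ : Measure Ω} {X : Ω → ℝ}
    (hX : ∃ᶠ t : ℝ in 𝓝[≠] 0, AEMeasurable (fun w ↦ Complex.exp (Complex.I * (t * X w))) μ) :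
    AEMeasurable X μ := by
  obtain ⟨t, ht, hmeas⟩ := exists_seq_forall_of_frequently hX
  refine aemeasurable_of_tendsto_metrizable_ae' (f := fun k w ↦ Real.sin (t k * X w) / t k)
    (fun k ↦ ?_) (.of_forall fun w ↦ (tendsto_sin_mul_div (X w)).comp ht)
  have him (w : Ω) : Real.sin (t k * X w) = (Complex.exp (Complex.I * (t k * X w))).im := by
    rw [mul_comm Complex.I, ← Complex.ofReal_mul, Complex.exp_ofReal_mul_I_im]
  simp only [him]
  exact (Complex.measurable_im.comp_aemeasurable (hmeas k)).div_const _

theorem aemeasurable_of_tendsto_integral_cexp {Ω : Type*} [MeasurableSpace Ω]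
    {μ : Measure Ω} {X : Ω → ℝ} {L : ℂ} (hL : L ≠ 0)
    (hlim : Tendsto (fun t : ℝ ↦ ∫ w, Complex.exp (Complex.I * (t * X w)) ∂μ) (𝓝[≠] 0) (𝓝 L)) :
    AEMeasurable X μ := by
  refine aemeasurable_of_frequently_aemeasurable_cexp (Eventually.frequently ?_)
  filter_upwards [hlim.eventually_ne hL] with t ht
  exact (Integrable.of_integral_ne_zero ht).aemeasurable

end Integration

section CharFun

theorem cexp_mul_I_sub_one (u : ℝ) : Complex.exp (u * Complex.I) - 1 =
    Complex.exp ((u / 2 : ℝ) * Complex.I) * ((2 * Real.sin (u / 2) : ℝ) * Complex.I) := by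
  have hsin : ((2 * Real.sin (u / 2) : ℝ) : ℂ) * Complex.I =
      Complex.exp ((u / 2 : ℝ) * Complex.I) - Complex.exp (-((u / 2 : ℝ) * Complex.I)) := by
    push_cast
    rw [Complex.two_sin, mul_assoc, Complex.I_mul_I, mul_neg_one, neg_sub, neg_mul]
  rw [hsin, mul_sub, ← Complex.exp_add, ← Complex.exp_add, add_neg_cancel, Complex.exp_zero,
    ← add_mul, ← Complex.ofReal_add, add_halves]

section InnerProductSpace

variable {E : Type*} [NormedAddCommGroup E] [InnerProductSpace ℝ E] [MeasurableSpace E]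
  [BorelSpace E] [SecondCountableTopology E] {μ : Measure E} [IsFiniteMeasure μ]

theorem isNegInvariant_of_charFun_neg [CompleteSpace E]
    (hμ : ∀ t, charFun μ (-t) = charFun μ t) : μ.IsNegInvariant where
  neg_eq_self := by
    have : IsFiniteMeasure μ.neg := inferInstanceAs (IsFiniteMeasure (μ.map Neg.neg))
    refine Measure.ext_of_charFun (funext fun t ↦ ?_)
    rw [← hμ t, charFun_apply, charFun_apply, Measure.neg, integral_map (by fun_prop) (by fun_prop)]
    simp only [inner_neg_left, inner_neg_right]

variable (μ) in
theorem fwdDiff_iter_charFun (h t : E) (n : ℕ) :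
    Δ_[h] ^[n] (charFun μ) t =
      ∫ x, (Complex.exp (⟪x, h⟫ * Complex.I) - 1) ^ n * Complex.exp (⟪x, t⟫ * Complex.I) ∂μ := by
  have hexp (x : E) : Δ_[h] ^[n] (fun s ↦ Complex.exp (⟪x, s⟫ * Complex.I)) t =
      (Complex.exp (⟪x, h⟫ * Complex.I) - 1) ^ n * Complex.exp (⟪x, t⟫ * Complex.I) :=
    fwdDiff_addChar_eq ((Circle.coeHom.compAddChar Real.probChar).compAddMonoidHom
      (innerSL ℝ x).toLinearMap.toAddMonoidHom) t h n
  have hint (s : E) : Integrable (fun x ↦ Complex.exp (⟪x, s⟫ * Complex.I)) μ := by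
    refine .of_bound (C := 1) (by fun_prop) (.of_forall fun x ↦ ?_)
    rw [Complex.norm_exp_ofReal_mul_I]
  simp only [← hexp, fwdDiff_iter_eq_sum_shift, charFun_apply, zsmul_eq_mul]
  rw [integral_finsetSum _ fun k _ ↦ (hint _).const_mul _]
  simp only [integral_const_mul]

variable (μ) in
theorem fwdDiff_two_mul_iter_charFun (h : E) (n : ℕ) :
    Δ_[h] ^[2 * n] (charFun μ) (-(n • h)) =
      (-1) ^ n * (∫ x, (2 * Real.sin (⟪x, h⟫ / 2)) ^ (2 * n) ∂μ : ℝ) := by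
  rw [fwdDiff_iter_charFun, ← integral_complex_ofReal, ← integral_const_mul]
  congr 1 with x
  have hphase : Complex.exp ((⟪x, h⟫ / 2 : ℝ) * Complex.I) ^ (2 * n) *
      Complex.exp (⟪x, -(n • h)⟫ * Complex.I) = 1 := by
    rw [← Complex.exp_nat_mul, ← Complex.exp_add, inner_neg_right, inner_smul_right_eq_smul,
      ← Complex.exp_zero]
    congr 1
    push_cast [nsmul_eq_mul]
    ring
  have hI : Complex.I ^ (2 * n) = (-1) ^ n := by rw [pow_mul, Complex.I_sq]
  rw [cexp_mul_I_sub_one, mul_pow, mul_right_comm, hphase, mul_pow, hI]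
  push_cast
  ring

end InnerProductSpace

section Real

variable {μ : Measure ℝ} [IsFiniteMeasure μ]

theorem tendsto_integral_sin_div_pow_of_charFun_isLittleO {n : ℕ} {P : ℂ[X]}
    (hP : P.natDegree ≤ 2 * n)
    (hμ : (fun t : ℝ ↦ charFun μ t - P.eval (t : ℂ)) =o[𝓝 0] fun t ↦ t ^ (2 * n)) :
    Tendsto (fun h ↦ ((∫ x, (2 * Real.sin (h * x / 2) / h) ^ (2 * n) ∂μ : ℝ) : ℂ)) (𝓝[≠] 0)
      (𝓝 ((-1) ^ n * ((2 * n)! * P.coeff (2 * n)))) := by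
  have hdiff := (isLittleO_fwdDiff_iter_sub hP hμ (-n)).mono (nhdsWithin_le_nhds (s := {0}ᶜ))
  have hpeano : (fun h : ℝ ↦ Δ_[h] ^[2 * n] (charFun μ) (h * -n) -
      (h : ℂ) ^ (2 * n) * ((2 * n)! * P.coeff (2 * n))) =o[𝓝[≠] 0] fun h ↦ (h : ℂ) ^ (2 * n) := by
    refine hdiff.norm_right.congr_right ?_ |>.of_norm_right
    simp
  have hlim := (hpeano.tendsto_div_nhds_zero.add_const ((2 * n)! * P.coeff (2 * n))).const_mul
    ((-1) ^ n)
  rw [zero_add] at hlim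
  refine hlim.congr' ?_
  filter_upwards [self_mem_nhdsWithin] with h hh
  have hpow0 : (h : ℂ) ^ (2 * n) ≠ 0 := pow_ne_zero _ (Complex.ofReal_ne_zero.mpr hh)
  have hcenter : h * -n = -(n • h) := by simp [mul_comm]
  have hsign : ((-1 : ℂ) ^ n) * (-1) ^ n = 1 := by rw [← mul_pow]; simp
  rw [hcenter, fwdDiff_two_mul_iter_charFun, sub_div, mul_div_cancel_left₀ _ hpow0, sub_add_cancel,
    ← mul_div_assoc, ← mul_assoc, hsign, one_mul]
  simp only [div_pow, integral_div, Complex.ofReal_div, Complex.ofReal_pow]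
  simp [mul_comm]

theorem integrable_pow_and_integral_pow_eq_of_charFun_isLittleO {n : ℕ} {P : ℂ[X]}
    (hP : P.natDegree ≤ 2 * n)
    (hμ : (fun t : ℝ ↦ charFun μ t - P.eval (t : ℂ)) =o[𝓝 0] fun t ↦ t ^ (2 * n)) :
    Integrable (fun x ↦ x ^ (2 * n)) μ ∧
      ((∫ x, x ^ (2 * n) ∂μ : ℝ) : ℂ) = (-1) ^ n * ((2 * n)! * P.coeff (2 * n)) := by
  -- At `h = 0` the division makes `F 0` the constant `0 ^ (2 * n)`, so the bounds hold there too.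
  set F : ℝ → ℝ → ℝ := fun h x ↦ (2 * Real.sin (h * x / 2) / h) ^ (2 * n)
  have hFint (h : ℝ) : Integrable (F h) μ := by
    refine .of_bound (C := (2 / |h|) ^ (2 * n)) (by fun_prop) (.of_forall fun x ↦ ?_)
    rw [norm_pow, norm_div, norm_mul, Real.norm_ofNat, Real.norm_eq_abs, Real.norm_eq_abs]
    gcongr
    exact mul_le_of_le_one_right zero_le_two (Real.abs_sin_le_one _)
  have hFle (h x : ℝ) : F h x ≤ x ^ (2 * n) := by
    calc F h x = |2 * Real.sin (h * x / 2) / h| ^ (2 * n) := ((even_two_mul n).pow_abs _).symm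
      _ ≤ |x| ^ (2 * n) := by grw [abs_two_mul_sin_div_le]
      _ = x ^ (2 * n) := (even_two_mul n).pow_abs x
  have hFlim (x : ℝ) : Tendsto (F · x) (𝓝[≠] 0) (𝓝 (x ^ (2 * n))) := by
    have := ((tendsto_sin_mul_div (x / 2)).const_mul 2).pow (2 * n)
    simpa only [← mul_div_assoc, mul_div_cancel_left₀ x two_ne_zero] using this
  have hlim := tendsto_integral_sin_div_pow_of_charFun_isLittleO hP hμ
  have hlim_re := (Complex.continuous_re.tendsto _).comp hlim
  obtain ⟨hint, heq⟩ := integrable_and_integral_eq_of_tendsto hFint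
    (fun h x ↦ (even_two_mul n).pow_nonneg _) hFle hFlim hlim_re
  refine ⟨hint, tendsto_nhds_unique ?_ hlim⟩
  rw [heq]
  exact (Complex.continuous_ofReal.tendsto _).comp hlim_re

theorem exists_polynomial_isLittleO_comp_mul_sq {f : ℂ → ℂ} {p : FormalMultilinearSeries ℂ ℂ ℂ}
    (hf : HasFPowerSeriesAt f p 0) (c : ℂ) (n : ℕ) :
    ∃ P : ℂ[X], P.natDegree ≤ 2 * n ∧ P.coeff (2 * n) = c ^ n * p.coeff n ∧
      (fun t : ℝ ↦ f (c * t ^ 2) - P.eval (t : ℂ)) =o[𝓝 0] fun t ↦ t ^ (2 * n) := by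
  set Q : ℂ[X] := ∑ k ∈ Finset.range (n + 1), C (p.coeff k) * X ^ k
  have hQeval (z : ℂ) : Q.eval z = p.partialSum (n + 1) z := by
    simp only [Q, eval_finsetSum, eval_C_mul, eval_X_pow, FormalMultilinearSeries.partialSum,
      FormalMultilinearSeries.apply_eq_pow_smul_coeff, smul_eq_mul, mul_comm (p.coeff _)]
  have hQcoeff : Q.coeff n = p.coeff n := by simp [Q]
  have hQdeg : Q.natDegree ≤ n := natDegree_sum_le_of_forall_le _ _ fun k hk ↦
    (natDegree_C_mul_X_pow_le _ _).trans (Nat.lt_succ_iff.mp (Finset.mem_range.mp hk))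
  refine ⟨expand ℂ 2 (Q.comp (C c * X)), ?_, ?_, ?_⟩
  · rw [natDegree_expand, mul_comm]
    gcongr
    exact (natDegree_comp_C_mul_X_le Q c).trans hQdeg
  · rw [coeff_expand_mul' two_pos, comp_C_mul_X_coeff, hQcoeff, mul_comm]
  · have hsq : Tendsto (fun t : ℝ ↦ c * (t : ℂ) ^ 2) (𝓝 0) (𝓝 0) := by
      have : Continuous fun t : ℝ ↦ c * (t : ℂ) ^ 2 := by fun_prop
      simpa using this.tendsto 0
    have hO := (hf.isBigO_sub_partialSum_pow (n + 1)).comp_tendsto hsq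
    have hpow : (fun t : ℝ ↦ ‖c * (t : ℂ) ^ 2‖ ^ (n + 1)) =O[𝓝 0] fun t ↦ t ^ (2 * (n + 1)) := by
      refine .of_bound (‖c‖ ^ (n + 1)) (.of_forall fun t ↦ le_of_eq ?_)
      simp [mul_pow, pow_mul]
    refine ((hO.trans hpow).trans_isLittleO (isLittleO_pow_pow (by lia))).congr_left fun t ↦ ?_
    simp [hQeval]

theorem integrable_pow_and_integral_pow_eq_of_charFun_eq_comp_mul_sq {f : ℂ → ℂ}
    {p : FormalMultilinearSeries ℂ ℂ ℂ} (hf : HasFPowerSeriesAt f p 0) {c : ℂ}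
    (hμ : ∀ᶠ t in 𝓝 0, charFun μ t = f (c * t ^ 2)) (n : ℕ) :
    Integrable (fun x ↦ x ^ (2 * n)) μ ∧
      ((∫ x, x ^ (2 * n) ∂μ : ℝ) : ℂ) = (-c) ^ n * (2 * n)! * p.coeff n := by
  obtain ⟨P, hdeg, hcoeff, hP⟩ := exists_polynomial_isLittleO_comp_mul_sq hf c n
  have hcharFun : (fun t : ℝ ↦ charFun μ t - P.eval (t : ℂ)) =o[𝓝 0] fun t ↦ t ^ (2 * n) :=
    hP.congr' (hμ.mono fun t ht ↦ congrArg (· - P.eval (t : ℂ)) ht.symm) .rfl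
  obtain ⟨hint, heq⟩ := integrable_pow_and_integral_pow_eq_of_charFun_isLittleO hdeg hcharFun
  refine ⟨hint, ?_⟩
  rw [heq, hcoeff, neg_pow]
  ring

end Real

end CharFun

section MittagLeffler

open FormalMultilinearSeries

theorem mittagLeffler_zero (β : ℝ) : mittagLeffler β 0 = 1 := by
  rw [mittagLeffler, tsum_eq_single 0 fun n hn ↦ by simp [hn]]
  simp

theorem eventually_one_le_Gamma_mul_add_one {β : ℝ} (hβ : 0 < β) :
    ∀ᶠ k : ℕ in atTop, 1 ≤ Real.Gamma (β * k + 1) := by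
  have hlarge : Tendsto (fun k : ℕ ↦ β * k + 1) atTop atTop :=
    tendsto_atTop_add_const_right _ _ (tendsto_natCast_atTop_atTop.const_mul_atTop hβ)
  filter_upwards [hlarge.eventually_ge_atTop 2] with k hk
  simpa only [Real.Gamma_two] using
    Real.Gamma_strictMonoOn_Ici.monotoneOn Set.self_mem_Ici hk hk

theorem hasFPowerSeriesAt_mittagLeffler {β : ℝ} (hβ : 0 < β) :
    HasFPowerSeriesAt (mittagLeffler β)
      (ofScalars ℂ fun k : ℕ ↦ (Real.Gamma (β * k + 1) : ℂ)⁻¹) 0 := by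
  set p := ofScalars ℂ fun k : ℕ ↦ (Real.Gamma (β * k + 1) : ℂ)⁻¹
  have hsum : mittagLeffler β = p.sum := by
    ext z
    simp [mittagLeffler, p, FormalMultilinearSeries.sum, div_eq_mul_inv, ← Complex.Gamma_ofReal]
  have hradius : ((1 : NNReal) : ENNReal) ≤ p.radius := by
    refine p.le_radius_of_eventually_le 1 ?_
    filter_upwards [eventually_one_le_Gamma_mul_add_one hβ] with k hk
    simpa [p, abs_of_nonneg (zero_le_one.trans hk)] using inv_le_one_of_one_le₀ hk
  rw [hsum]
  exact (p.hasFPowerSeriesOnBall (one_pos.trans_le hradius)).hasFPowerSeriesAt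

theorem moments_of_charFun_eq_mittagLeffler {μ : Measure ℝ} [IsFiniteMeasure μ] {β : ℝ}
    (hβ : 0 < β) {σ : ℝ}
    (hμ : ∀ t : ℝ, charFun μ t = mittagLeffler β (-((t ^ 2 * σ ^ 2 / 2 : ℝ) : ℂ))) (n : ℕ) :
    Integrable (fun x ↦ x ^ n) μ ∧ ∫ x, x ^ (2 * n + 1) ∂μ = 0 ∧
      ∫ x, x ^ (2 * n) ∂μ = (2 * n)! / (2 ^ n * Real.Gamma (β * n + 1)) * σ ^ (2 * n) := by
  have hscale (t : ℝ) : charFun μ t = mittagLeffler β ((-(σ ^ 2 / 2) : ℝ) * t ^ 2) := by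
    rw [hμ]
    push_cast
    ring_nf
  obtain ⟨hint, heven⟩ := integrable_pow_and_integral_pow_eq_of_charFun_eq_comp_mul_sq
    (hasFPowerSeriesAt_mittagLeffler hβ) (.of_forall hscale) n
  have : μ.IsNegInvariant := isNegInvariant_of_charFun_neg fun t ↦ by simp only [hμ, neg_sq]
  refine ⟨?_, integral_eq_zero_of_odd fun x ↦ (odd_two_mul_add_one n).neg_pow x, ?_⟩
  · have hnorm : Integrable (fun x ↦ ‖x ^ n‖) μ := by
      simp only [norm_pow]
      refine integrable_norm_pow_of_le (by fun_prop) (Nat.le_mul_of_pos_left n two_pos) ?_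
      simpa only [norm_pow] using hint.norm
    exact (integrable_norm_iff (by fun_prop)).mp hnorm
  · rw [coeff_ofScalars, ← Complex.ofReal_neg, neg_neg] at heven
    norm_cast at heven
    rw [heven, div_pow, ← pow_mul]
    ring

theorem mittagLeffler_measure_moments_general
    {Ω : Type*} [MeasurableSpace Ω] (μ : Measure Ω) [IsFiniteMeasure μ]
    (β : ℝ) (hβ : 0 < β) (X : Ω → ℝ) (σ : ℝ)
    (hchar : ∀ t : ℝ,
      ∫ w, Complex.exp (Complex.I * (t * X w)) ∂μ =
        mittagLeffler β (-((t ^ 2 * σ ^ 2 / 2 : ℝ) : ℂ))) :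
    ∀ n : ℕ, Integrable (fun w ↦ X w ^ n) μ ∧
      (∫ w, X w ^ (2 * n + 1) ∂μ) = 0 ∧
      (∫ w, X w ^ (2 * n) ∂μ) =
        (2 * n).factorial / (2 ^ n * Real.Gamma (β * n + 1)) * σ ^ (2 * n) := by
  have hcont : ContinuousAt
      (fun t : ℝ ↦ ∫ w, Complex.exp (Complex.I * (t * X w)) ∂μ) 0 := by
    simp only [hchar]
    exact (hasFPowerSeriesAt_mittagLeffler hβ).continuousAt.comp_of_eq (by fun_prop) (by simp)
  have hone : ∫ w, Complex.exp (Complex.I * ((0 : ℝ) * X w)) ∂μ = 1 := by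
    simpa [mittagLeffler_zero] using hchar 0
  have hX : AEMeasurable X μ := aemeasurable_of_tendsto_integral_cexp
    (hone ▸ one_ne_zero) (hcont.tendsto.mono_left nhdsWithin_le_nhds)
  have hcharFun (t : ℝ) : charFun (μ.map X) t =
      mittagLeffler β (-((t ^ 2 * σ ^ 2 / 2 : ℝ) : ℂ)) := by
    rw [← hchar, charFun_apply_real, integral_map hX (by fun_prop)]
    simp only [mul_comm Complex.I]
  intro n
  have hmoments := moments_of_charFun_eq_mittagLeffler hβ hcharFun n
  rwa [integrable_map_measure (by fun_prop) hX, integral_map hX (by fun_prop),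
    integral_map hX (by fun_prop)] at hmoments

end MittagLeffler

/-- Moments under the Mittag-Leffler (grey noise) measure: if a real random variable `X`
(standing for `⟨·,φ⟩` under `μ_β`) has characteristic function `t ↦ E_β(-½ t² σ²)` with
`σ = |φ|₀`, then its odd moments vanish and its even moments are
`(2n)!/(2ⁿ Γ(βn+1)) σ^{2n}`. -/
theorem mittagLeffler_measure_moments
    {Ω : Type*} [MeasurableSpace Ω] (μ : Measure Ω) [IsProbabilityMeasure μ]
    (β : ℝ) (hβ₀ : 0 < β) (hβ₁ : β ≤ 1) (X : Ω → ℝ) (σ : ℝ) (hσ : 0 ≤ σ)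
    (hchar : ∀ t : ℝ,
      ∫ w, Complex.exp (Complex.I * (t * X w)) ∂μ =
        mittagLeffler β (-((t ^ 2 * σ ^ 2 / 2 : ℝ) : ℂ))) :
    ∀ n : ℕ,
      (∫ w, X w ^ (2 * n + 1) ∂μ) = 0 ∧
      (∫ w, X w ^ (2 * n) ∂μ) =
        (2 * n).factorial / (2 ^ n * Real.Gamma (β * n + 1)) * σ ^ (2 * n) :=
  fun n ↦ (mittagLeffler_measure_moments_general μ β hβ₀ X σ hchar n).2
end

section
/- For 0 < β ≤ 1 and every s ≥ 0, 0 ≤ E_β(−s) ≤ 1 and E_β(−s) is non-increasing in s. -/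
/-!
The Laplace transform of `t ↦ E_β(-s t ^ β)` is `p ^ (β - 1) / (p ^ β + s)`. Replacing `p` by
`1 - X` gives the power series `(1 - X) ^ (β - 1) / ((1 - X) ^ β + c)`, for which positivity is
algebra: for `0 ≤ β ≤ 1` the series `(1 - X) ^ β` has no positive coefficient besides the constant
one, so the inverse of `(1 - X) ^ β + c` has nonnegative coefficients, and the resolvent identity
makes the coefficients antitone in `c`. Expanding in powers of `c`, the `n`-th coefficient at
`c = s n ^ (-β)` is a perturbation of the Mittag-Leffler series at `-s`, and converges to it by
Euler's limit formula for `Γ` and dominated convergence.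
-/

open Filter Finset PowerSeries Topology

section PowerSeriesPositivity

theorem coeff_mul_nonneg {R : Type*} [Semiring R] [PartialOrder R] [IsOrderedRing R] {f g : R⟦X⟧}
    (hf : ∀ n, 0 ≤ coeff n f) (hg : ∀ n, 0 ≤ coeff n g) (n : ℕ) : 0 ≤ coeff n (f * g) := by
  rw [coeff_mul]
  exact sum_nonneg fun p _ => mul_nonneg (hf p.1) (hg p.2)

theorem coeff_inv_nonneg {K : Type*} [Field K] [LinearOrder K] [IsStrictOrderedRing K] {f : K⟦X⟧}
    (h_zero : 0 ≤ constantCoeff f) (h_succ : ∀ n, coeff (n + 1) f ≤ 0) (n : ℕ) :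
    0 ≤ coeff n f⁻¹ := by
  induction n using Nat.strong_induction_on with
  | _ n ih =>
    rw [coeff_inv]
    split_ifs with hn
    · exact inv_nonneg.2 h_zero
    · refine mul_nonneg_of_nonpos_of_nonpos (neg_nonpos.2 (inv_nonneg.2 h_zero))
        (sum_nonpos fun p hp => ?_)
      split_ifs with hlt
      · obtain ⟨m, hm⟩ : ∃ m, p.1 = m + 1 :=
          Nat.exists_eq_add_one.2 (by have := mem_antidiagonal.1 hp; omega)
        rw [hm]
        exact mul_nonpos_of_nonpos_of_nonneg (h_succ m) (ih p.2 hlt)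
      · exact le_rfl

end PowerSeriesPositivity

section Multichoose

theorem multichoose_natCast_add_one (R : Type*) [Ring R] [BinomialRing R] (k n : ℕ) :
    Ring.multichoose (k + 1 : R) n = (k + n).choose n := by
  rw [Ring.multichoose_eq, add_right_comm, add_sub_cancel_right, ← Nat.cast_add,
    Ring.choose_natCast]

variable {K : Type*} [Field K]

theorem multichoose_eq_prod_div_factorial [CharZero K] (r : K) (n : ℕ) :
    Ring.multichoose r n = (∏ j ∈ range n, (r + j)) / n.factorial := by
  rw [eq_div_iff (Nat.cast_ne_zero.2 n.factorial_ne_zero), mul_comm, ← nsmul_eq_mul,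
    Ring.factorial_nsmul_multichoose_eq_ascPochhammer, Polynomial.ascPochhammer_smeval_eq_eval]
  induction n with
  | zero => simp
  | succ n ih => rw [ascPochhammer_succ_eval, ih, prod_range_succ]

theorem multichoose_succ [CharZero K] (r : K) (n : ℕ) :
    Ring.multichoose r (n + 1) = Ring.multichoose r n * ((r + n) / (n + 1)) := by
  simp only [multichoose_eq_prod_div_factorial, prod_range_succ, Nat.factorial_succ, Nat.cast_mul,
    Nat.cast_succ]
  rw [div_mul_div_comm, mul_comm (n.factorial : K)]

variable [LinearOrder K] [IsStrictOrderedRing K] {r s : K}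

theorem multichoose_le_multichoose (hr : 0 ≤ r) (hrs : r ≤ s) (n : ℕ) :
    Ring.multichoose r n ≤ Ring.multichoose s n := by
  simp only [multichoose_eq_prod_div_factorial]
  gcongr

theorem multichoose_nonneg (hr : 0 ≤ r) (n : ℕ) : 0 ≤ Ring.multichoose r n := by
  rw [multichoose_eq_prod_div_factorial]
  positivity

theorem multichoose_succ_nonpos (h_neg_one : -1 ≤ r) (h_zero : r ≤ 0) (n : ℕ) :
    Ring.multichoose r (n + 1) ≤ 0 := by
  rw [multichoose_eq_prod_div_factorial, prod_range_succ']
  refine div_nonpos_of_nonpos_of_nonneg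
    (mul_nonpos_of_nonneg_of_nonpos (prod_nonneg fun j _ => ?_) (by simpa using h_zero))
    (by positivity)
  push_cast
  linarith [j.cast_nonneg (α := K)]

end Multichoose

section NegBinomialSeries

variable {R : Type*} [CommRing R] [BinomialRing R]

/-- The binomial series of `(1 - X) ^ (-r)`; the sign convention makes its coefficients
nonnegative for `0 ≤ r`. -/
noncomputable def negBinomialSeries (r : R) : R⟦X⟧ :=
  PowerSeries.mk (Ring.multichoose r)

@[simp]
theorem coeff_negBinomialSeries (r : R) (n : ℕ) :
    coeff n (negBinomialSeries r) = Ring.multichoose r n :=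
  coeff_mk n _

theorem negBinomialSeries_eq_rescale_binomialSeries (r : R) :
    negBinomialSeries r = rescale (-1) (binomialSeries R (-r)) := by
  ext n
  rw [coeff_negBinomialSeries, coeff_rescale, binomialSeries_coeff, Ring.choose_neg',
    smul_eq_mul, mul_one, Units.smul_def, zsmul_eq_mul, Int.cast_negOnePow_natCast, ← mul_assoc,
    ← mul_pow, neg_one_mul, neg_neg, one_pow, one_mul]

theorem negBinomialSeries_add (r s : R) :
    negBinomialSeries (r + s) = negBinomialSeries r * negBinomialSeries s := by
  simp only [negBinomialSeries_eq_rescale_binomialSeries, neg_add, binomialSeries_add, map_mul]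

open scoped PowerSeries.WithPiTopology in
theorem negBinomialSeries_neg_mul_of_hasSum [TopologicalSpace R] [IsTopologicalSemiring R]
    [T2Space R] {β c : R} {S : R⟦X⟧}
    (hS : HasSum (fun k : ℕ => C ((-c) ^ k) * negBinomialSeries (β * k + 1)) S) :
    negBinomialSeries (-β) * S = negBinomialSeries (1 - β) + C (-c) * S := by
  have term_zero : negBinomialSeries (-β) *
      (C ((-c) ^ 0) * negBinomialSeries (β * (0 : ℕ) + 1)) = negBinomialSeries (1 - β) := by
    rw [pow_zero, map_one, one_mul, ← negBinomialSeries_add]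
    congr 1
    push_cast
    ring
  have term_succ (k : ℕ) : negBinomialSeries (-β) *
      (C ((-c) ^ (k + 1)) * negBinomialSeries (β * (k + 1 : ℕ) + 1)) =
      C (-c) * (C ((-c) ^ k) * negBinomialSeries (β * k + 1)) := by
    rw [mul_left_comm, ← negBinomialSeries_add, pow_succ', map_mul, mul_assoc]
    congr 3
    push_cast
    ring
  rw [← term_zero]
  refine (hS.mul_left _).unique (HasSum.zero_add ?_)
  simpa only [term_succ] using hS.mul_left (C (-c))

end NegBinomialSeries

section MittagLefflerSeries

variable {β c d : ℝ}

/-- The power series `(1 - X) ^ (β - 1) / ((1 - X) ^ β + c)`, a discrete analogue of the Laplace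
transform `p ^ (β - 1) / (p ^ β + c)` of `t ↦ E_β(-c t ^ β)`. -/
noncomputable def mittagLefflerSeries (β c : ℝ) : ℝ⟦X⟧ :=
  negBinomialSeries (1 - β) * (negBinomialSeries (-β) + C c)⁻¹

theorem constantCoeff_negBinomialSeries_add_C (r c : ℝ) :
    constantCoeff (negBinomialSeries r + C c) = 1 + c := by
  rw [map_add, constantCoeff_C, ← coeff_zero_eq_constantCoeff_apply, coeff_negBinomialSeries,
    Ring.multichoose_zero_right]

theorem coeff_inv_negBinomialSeries_add_C_nonneg (hβ₀ : 0 ≤ β) (hβ₁ : β ≤ 1) (hc : -1 < c) (n : ℕ) :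
    0 ≤ coeff n (negBinomialSeries (-β) + C c)⁻¹ := by
  refine coeff_inv_nonneg ?_ (fun m => ?_) n
  · rw [constantCoeff_negBinomialSeries_add_C]
    linarith
  · rw [map_add, coeff_negBinomialSeries, coeff_C, if_neg m.succ_ne_zero, add_zero]
    exact multichoose_succ_nonpos (neg_le_neg hβ₁) (neg_nonpos.2 hβ₀) m

theorem coeff_mittagLefflerSeries_nonneg (hβ₀ : 0 ≤ β) (hβ₁ : β ≤ 1) (hc : -1 < c) (n : ℕ) :
    0 ≤ coeff n (mittagLefflerSeries β c) := by
  refine coeff_mul_nonneg (fun m => ?_) (coeff_inv_negBinomialSeries_add_C_nonneg hβ₀ hβ₁ hc) n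
  rw [coeff_negBinomialSeries]
  exact multichoose_nonneg (sub_nonneg.2 hβ₁) m

theorem mittagLefflerSeries_resolvent_identity (β : ℝ) (hc : 1 + c ≠ 0) (hd : 1 + d ≠ 0) :
    mittagLefflerSeries β c = mittagLefflerSeries β d +
      C (d - c) * (mittagLefflerSeries β d * (negBinomialSeries (-β) + C c)⁻¹) := by
  have inv_c := PowerSeries.mul_inv_cancel (negBinomialSeries (-β) + C c)
    (by rwa [constantCoeff_negBinomialSeries_add_C])
  have inv_d := PowerSeries.mul_inv_cancel (negBinomialSeries (-β) + C d)
    (by rwa [constantCoeff_negBinomialSeries_add_C])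
  simp only [mittagLefflerSeries, map_sub]
  generalize (negBinomialSeries (-β) + C c)⁻¹ = u at *
  generalize (negBinomialSeries (-β) + C d)⁻¹ = v at *
  linear_combination negBinomialSeries (1 - β) * v * inv_c - negBinomialSeries (1 - β) * u * inv_d

theorem coeff_mittagLefflerSeries_le (hβ₀ : 0 ≤ β) (hβ₁ : β ≤ 1) (hc : -1 < c) (hcd : c ≤ d)
    (n : ℕ) : coeff n (mittagLefflerSeries β d) ≤ coeff n (mittagLefflerSeries β c) := by
  rw [mittagLefflerSeries_resolvent_identity β (d := d) (by linarith : 0 < 1 + c).ne'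
    (by linarith : 0 < 1 + d).ne', map_add, coeff_C_mul]
  exact le_add_of_nonneg_right <| mul_nonneg (sub_nonneg.2 hcd) <| coeff_mul_nonneg
    (coeff_mittagLefflerSeries_nonneg hβ₀ hβ₁ (hc.trans_le hcd))
    (coeff_inv_negBinomialSeries_add_C_nonneg hβ₀ hβ₁ hc) n

theorem summable_pow_mul_multichoose (hβ₀ : 0 ≤ β) (hβ₁ : β ≤ 1) (hc : |c| < 1) (n : ℕ) :
    Summable fun k : ℕ => c ^ k * Ring.multichoose (β * k + 1) n := by
  have hchoose := summable_choose_mul_geometric_of_norm_lt_one n (r := |c|)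
    (by rwa [Real.norm_eq_abs, abs_abs])
  refine Summable.of_norm_bounded hchoose fun k => ?_
  have hβk : β * k ≤ k := mul_le_of_le_one_left k.cast_nonneg hβ₁
  rw [norm_mul, norm_pow, Real.norm_eq_abs, mul_comm,
    Real.norm_of_nonneg (multichoose_nonneg (by positivity) n), ← multichoose_natCast_add_one ℝ]
  gcongr
  exact multichoose_le_multichoose (by positivity) (by gcongr) n

open scoped PowerSeries.WithPiTopology in
theorem hasSum_mittagLefflerSeries (hβ₀ : 0 ≤ β) (hβ₁ : β ≤ 1) (hc : |c| < 1) :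
    HasSum (fun k : ℕ => C ((-c) ^ k) * negBinomialSeries (β * k + 1))
      (mittagLefflerSeries β c) := by
  have hsummable : Summable fun k : ℕ => C ((-c) ^ k) * negBinomialSeries (β * k + 1) := by
    rw [WithPiTopology.summable_iff_summable_coeff]
    intro n
    simpa only [coeff_C_mul, coeff_negBinomialSeries] using
      summable_pow_mul_multichoose hβ₀ hβ₁ (by rwa [abs_neg]) n
  obtain ⟨S, hS⟩ := hsummable
  have hS_eq : S = mittagLefflerSeries β c := by
    rw [mittagLefflerSeries, PowerSeries.eq_mul_inv_iff_mul_eq]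
    · have functional_equation := negBinomialSeries_neg_mul_of_hasSum hS
      rw [map_neg] at functional_equation
      linear_combination functional_equation
    · rw [constantCoeff_negBinomialSeries_add_C]
      linarith [neg_lt_of_abs_lt hc]
  rwa [← hS_eq]

theorem hasSum_coeff_mittagLefflerSeries (hβ₀ : 0 ≤ β) (hβ₁ : β ≤ 1) (hc : |c| < 1) (n : ℕ) :
    HasSum (fun k : ℕ => (-c) ^ k * Ring.multichoose (β * k + 1) n)
      (coeff n (mittagLefflerSeries β c)) := by
  simpa only [coeff_C_mul, coeff_negBinomialSeries] using
    (WithPiTopology.hasSum_iff_hasSum_coeff ℝ).1 (hasSum_mittagLefflerSeries hβ₀ hβ₁ hc) n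

end MittagLefflerSeries

section NormalizedMultichoose

variable {x : ℝ}

/-- `Γ(n + x + 1) / (n ^ x n! Γ(x + 1))`, which is Euler's approximation to `1 / Γ(x + 1)`. -/
noncomputable def normalizedMultichoose (x : ℝ) (n : ℕ) : ℝ :=
  (n : ℝ) ^ (-x) * Ring.multichoose (x + 1) n

theorem normalizedMultichoose_nonneg (hx : -1 ≤ x) (n : ℕ) : 0 ≤ normalizedMultichoose x n :=
  mul_nonneg (by positivity) (multichoose_nonneg (by linarith) n)

theorem one_add_mul_one_sub_inv_le_rpow {y : ℝ} (hx : 0 ≤ x) (hy : 0 < y) :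
    1 + x * (1 - y⁻¹) ≤ y ^ x :=
  calc 1 + x * (1 - y⁻¹) ≤ 1 + x * Real.log y := by
        gcongr
        exact Real.one_sub_inv_le_log_of_pos hy
    _ ≤ Real.exp (x * Real.log y) := by
        rw [add_comm]
        exact Real.add_one_le_exp _
    _ = y ^ x := by rw [Real.rpow_def_of_pos hy, mul_comm]

theorem normalizedMultichoose_succ_le (hx : 0 ≤ x) {n : ℕ} (hn : 0 < n) :
    normalizedMultichoose x (n + 1) ≤ normalizedMultichoose x n := by
  have hn' : (0 : ℝ) < n := by exact_mod_cast hn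
  have ratio_le : (x + 1 + n) / (n + 1) ≤ ((n + 1 : ℝ) / n) ^ x := by
    convert one_add_mul_one_sub_inv_le_rpow hx (y := (n + 1 : ℝ) / n) (by positivity) using 1
    field_simp
    ring
  calc normalizedMultichoose x (n + 1)
      = ((n + 1 : ℝ) ^ x)⁻¹ * ((x + 1 + n) / (n + 1)) * Ring.multichoose (x + 1) n := by
        rw [normalizedMultichoose, multichoose_succ, Nat.cast_succ, Real.rpow_neg (by positivity)]
        ring
    _ ≤ ((n + 1 : ℝ) ^ x)⁻¹ * ((n + 1 : ℝ) / n) ^ x * Ring.multichoose (x + 1) n := by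
        gcongr
        exact multichoose_nonneg (by positivity) n
    _ = normalizedMultichoose x n := by
        rw [normalizedMultichoose, Real.div_rpow (by positivity) hn'.le, Real.rpow_neg hn'.le]
        field_simp

theorem antitoneOn_normalizedMultichoose (hx : 0 ≤ x) :
    AntitoneOn (normalizedMultichoose x) (Set.Ici 1) :=
  antitoneOn_nat_Ici_of_succ_le fun _ hn => normalizedMultichoose_succ_le hx hn

theorem normalizedMultichoose_eq_div_GammaSeq (hx : ∀ m : ℕ, x + 1 ≠ -m) {n : ℕ} (hn : 0 < n) :
    normalizedMultichoose x n = n / (n + (x + 1)) / Real.GammaSeq (x + 1) n := by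
  have hn' : (0 : ℝ) < n := by exact_mod_cast hn
  have h_last : x + 1 + n ≠ 0 := fun h => hx n (eq_neg_of_add_eq_zero_left h)
  have h_last' : n + (x + 1) ≠ 0 := by rwa [add_comm]
  rw [normalizedMultichoose, multichoose_eq_prod_div_factorial, Real.GammaSeq, prod_range_succ,
    Real.rpow_neg hn'.le, Real.rpow_add_one hn'.ne']
  field_simp
  ring

theorem tendsto_normalizedMultichoose (hx : ∀ m : ℕ, x + 1 ≠ -m) :
    Tendsto (normalizedMultichoose x) atTop (𝓝 (1 / Real.Gamma (x + 1))) := by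
  refine ((tendsto_natCast_div_add_atTop (x + 1)).div (Real.GammaSeq_tendsto_Gamma (x + 1))
    (Real.Gamma_ne_zero hx)).congr' ?_
  filter_upwards [eventually_gt_atTop 0] with n hn
  exact (normalizedMultichoose_eq_div_GammaSeq hx hn).symm

end NormalizedMultichoose

section Limit

variable {β s : ℝ}

theorem mul_rpow_neg_pow_mul_multichoose (β s : ℝ) (n k : ℕ) :
    (s * (n : ℝ) ^ (-β)) ^ k * Ring.multichoose (β * k + 1) n =
      s ^ k * normalizedMultichoose (β * k) n := by
  rw [normalizedMultichoose, ← neg_mul, Real.rpow_mul_natCast n.cast_nonneg, mul_pow, mul_assoc]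

theorem eventually_abs_mul_rpow_neg_lt_one (hβ : 0 < β) (s : ℝ) :
    ∀ᶠ n : ℕ in atTop, |s * (n : ℝ) ^ (-β)| < 1 := by
  have h := (((tendsto_rpow_neg_atTop hβ).comp tendsto_natCast_atTop_atTop).const_mul s).abs
  rw [mul_zero, abs_zero] at h
  exact h.eventually_lt_const one_pos

theorem tendsto_coeff_mittagLefflerSeries (hβ₀ : 0 < β) (hβ₁ : β ≤ 1) (s : ℝ) :
    Tendsto (fun n : ℕ => coeff n (mittagLefflerSeries β (s * (n : ℝ) ^ (-β)))) atTop
      (𝓝 (mittagLefflerReal β (-s))) := by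
  have expansion : ∀ᶠ n : ℕ in atTop, ∑' k : ℕ, (-s) ^ k * normalizedMultichoose (β * k) n =
      coeff n (mittagLefflerSeries β (s * (n : ℝ) ^ (-β))) := by
    filter_upwards [eventually_abs_mul_rpow_neg_lt_one hβ₀ s] with n hn
    simp only [← (hasSum_coeff_mittagLefflerSeries hβ₀.le hβ₁ hn n).tsum_eq, ← neg_mul,
      mul_rpow_neg_pow_mul_multichoose]
  obtain ⟨N, hN, hN_pos⟩ := ((eventually_abs_mul_rpow_neg_lt_one hβ₀ |s|).and
    (eventually_ge_atTop 1)).exists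
  have summable_bound : Summable fun k : ℕ => |s| ^ k * normalizedMultichoose (β * k) N := by
    simpa only [mul_rpow_neg_pow_mul_multichoose] using
      summable_pow_mul_multichoose hβ₀.le hβ₁ hN N
  refine Tendsto.congr' expansion
    (tendsto_tsum_of_dominated_convergence summable_bound (fun k => ?_) ?_)
  · rw [div_eq_mul_one_div]
    refine (tendsto_normalizedMultichoose fun m => ?_).const_mul _
    exact ((neg_nonpos.2 m.cast_nonneg).trans_lt (by positivity)).ne'
  · filter_upwards [eventually_ge_atTop N] with n hn k
    have hβk : 0 ≤ β * k := by positivity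
    rw [norm_mul, norm_pow, norm_neg, Real.norm_eq_abs,
      Real.norm_of_nonneg (normalizedMultichoose_nonneg (by linarith) n)]
    gcongr
    exact antitoneOn_normalizedMultichoose hβk hN_pos (hN_pos.trans hn) hn

theorem mittagLefflerReal_zero (β : ℝ) : mittagLefflerReal β 0 = 1 := by
  rw [mittagLefflerReal, tsum_eq_single 0 fun n hn => by rw [zero_pow hn, zero_div]]
  simp

theorem mittagLefflerReal_neg_nonneg (hβ₀ : 0 < β) (hβ₁ : β ≤ 1) (hs : 0 ≤ s) :
    0 ≤ mittagLefflerReal β (-s) := by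
  refine ge_of_tendsto' (tendsto_coeff_mittagLefflerSeries hβ₀ hβ₁ s) fun n => ?_
  exact coeff_mittagLefflerSeries_nonneg hβ₀.le hβ₁ (neg_one_lt_zero.trans_le (by positivity)) n

theorem antitoneOn_mittagLefflerReal_neg (hβ₀ : 0 < β) (hβ₁ : β ≤ 1) :
    AntitoneOn (fun s => mittagLefflerReal β (-s)) (Set.Ici 0) := by
  intro s hs t _ hst
  rw [Set.mem_Ici] at hs
  refine le_of_tendsto_of_tendsto' (tendsto_coeff_mittagLefflerSeries hβ₀ hβ₁ t)
    (tendsto_coeff_mittagLefflerSeries hβ₀ hβ₁ s) fun n => ?_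
  exact coeff_mittagLefflerSeries_le hβ₀.le hβ₁ (neg_one_lt_zero.trans_le (by positivity))
    (by gcongr) n

end Limit

/-- For `0 < β ≤ 1` and every `s ≥ 0`, `0 ≤ E_β(-s) ≤ 1`, and `s ↦ E_β(-s)` is
non-increasing on `[0,∞)`. -/
theorem mittagLeffler_neg_mem_unit_and_antitone (β : ℝ) (hβ₀ : 0 < β) (hβ₁ : β ≤ 1) :
    (∀ s : ℝ, 0 ≤ s →
      0 ≤ mittagLefflerReal β (-s) ∧ mittagLefflerReal β (-s) ≤ 1) ∧
    (∀ s t : ℝ, 0 ≤ s → s ≤ t →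
      mittagLefflerReal β (-t) ≤ mittagLefflerReal β (-s)) := by
  have anti := antitoneOn_mittagLefflerReal_neg hβ₀ hβ₁
  refine ⟨fun s hs => ⟨mittagLefflerReal_neg_nonneg hβ₀ hβ₁ hs, ?_⟩,
    fun s t hs hst => anti hs (hs.trans hst) hst⟩
  calc mittagLefflerReal β (-s) ≤ mittagLefflerReal β (-0) := anti Set.self_mem_Ici hs hs
    _ = 1 := by rw [neg_zero, mittagLefflerReal_zero]
end
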